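/- arXiv:2005.06863 — 5 statements merged into one kernel-verified Lean document; each statement's English description precedes it below -/
import Mathlib

section
/- Let D ⊂ ℝ^d be a bounded set with closure K, 0 < γ ≤ 1, and let k ≥ 1 be an integer. For ℓ = 1,…,k let u_ℓ : K → ℝ have finite Hölder norm ‖u_ℓ‖_{C^{0,γ}} := max( sup_{y∈K} |u_ℓ(y)| , [u_ℓ]_γ ), where [u_ℓ]_γ := sup_{y≠y'∈K} |u_ℓ(y)−u_ℓ(y')|/‖y−y'‖^γ. Define the tensor-product function u : K^k → ℝ by u(y_1,…,y_k) := ∏_{ℓ=1}^k u_ℓ(y_ℓ). Then the mixed Hölder norm of u satisfies ‖u‖_{γ,mix} = ∏_{ℓ=1}^k ‖u_ℓ‖_{C^{0,γ}}. -/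
/-!
The mixed difference of a tensor product factorises: `Δ_T^h u (y)` is the product of the differences
`u_i (y_i + h_i) - u_i (y_i)` over `i ∈ T` and of the values `u_i (y_i)` over `i ∉ T`. Since `T` can
be recovered from `h` as the set of indices with `h_i ≠ 0`, and a value of `u` is the case `h = 0`,
the mixed norm is the supremum of `∏ i, q_i (y_i, h_i)` over all `(y, h)`, where `q_i (y, h)` is
`|u_i (y)|` if `h = 0` and the Hölder quotient of `u_i` between `y` and `y + h` otherwise. The pairs
`(y_i, h_i)` are chosen independently of each other, so this supremum is the product of the suprema
of the `q_i`, which are the Hölder norms of the factors.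
-/

open scoped ENNReal NNReal
open Finset

/-- The `γ`-Hölder norm (sup norm and Hölder seminorm) of `u : K → ℝ` on
`K = closure D`, valued in `[0,∞]`. -/
noncomputable def holderNormR {d : ℕ} (D : Set (EuclideanSpace ℝ (Fin d))) (γ : ℝ)
    (u : EuclideanSpace ℝ (Fin d) → ℝ) : ℝ≥0∞ :=
  max (⨆ y ∈ closure D, (‖u y‖₊ : ℝ≥0∞))
    (⨆ y ∈ closure D, ⨆ y' ∈ closure D, ⨆ (_ : y ≠ y'),
      (‖u y - u y'‖₊ : ℝ≥0∞) / (‖y - y'‖₊ : ℝ≥0∞) ^ γ)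

/-- The mixed `γ`-Hölder norm of `u : K^k → ℝ` on `K = closure D`:
the max of the sup norm and of all mixed difference quotients, in `[0,∞]`. -/
noncomputable def mixedHolderNormR {d k : ℕ} (D : Set (EuclideanSpace ℝ (Fin d))) (γ : ℝ)
    (u : (Fin k → EuclideanSpace ℝ (Fin d)) → ℝ) : ℝ≥0∞ :=
  max (⨆ y : Fin k → EuclideanSpace ℝ (Fin d), ⨆ (_ : ∀ i, y i ∈ closure D),
      (‖u y‖₊ : ℝ≥0∞))
    (⨆ T : Finset (Fin k), ⨆ (_ : T.Nonempty),
      ⨆ y : Fin k → EuclideanSpace ℝ (Fin d), ⨆ h : Fin k → EuclideanSpace ℝ (Fin d),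
      ⨆ (_ : ∀ i, y i ∈ closure D), ⨆ (_ : ∀ i ∈ T, h i ≠ 0),
      ⨆ (_ : ∀ i ∉ T, h i = 0), ⨆ (_ : ∀ i, y i + h i ∈ closure D),
      (‖∑ S ∈ T.powerset, (-1 : ℝ) ^ (T.card - S.card) *
          u (fun i => y i + if i ∈ S then h i else 0)‖₊ : ℝ≥0∞) /
        ∏ i ∈ T, (‖h i‖₊ : ℝ≥0∞) ^ γ)

theorem prod_iSup_eq_iSup_prod {ι : Type*} [Fintype ι] {α : ι → Type*}
    (f : ∀ i, α i → ℝ≥0∞) : ∏ i, ⨆ a, f i a = ⨆ a : ∀ i, α i, ∏ i, f i (a i) := by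
  classical
  by_cases hα : ∀ i, Nonempty (α i)
  · suffices ∀ s : Finset ι, ∏ i ∈ s, ⨆ a, f i a = ⨆ a : ∀ i, α i, ∏ i ∈ s, f i (a i) from
      this univ
    intro s
    induction s using Finset.induction_on with
    | empty => simp only [prod_empty, iSup_const]
    | insert j s hj ih =>
      simp only [prod_insert hj, ih, ENNReal.iSup_mul, ENNReal.mul_iSup]
      refine le_antisymm (iSup₂_le fun a b => ?_) (iSup_le fun a => le_iSup₂_of_le a (a j) le_rfl)
      have prod_update : ∏ i ∈ s, f i (Function.update a j b i) = ∏ i ∈ s, f i (a i) :=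
        prod_congr rfl fun i hi => by rw [Function.update_of_ne (ne_of_mem_of_not_mem hi hj)]
      refine le_iSup_of_le (Function.update a j b) ?_
      rw [Function.update_self, prod_update]
  · obtain ⟨j, hj⟩ := not_forall.mp hα
    rw [not_nonempty_iff] at hj
    have isEmpty_choices : IsEmpty (∀ i, α i) := ⟨fun a => hj.false (a j)⟩
    rw [iSup_of_empty, prod_eq_zero (mem_univ j) (iSup_of_empty _), bot_eq_zero]

theorem enorm_finsetProd {ι R : Type*} [SeminormedCommRing R] [NormMulClass R] [NormOneClass R]
    (s : Finset ι) (f : ι → R) : ‖∏ i ∈ s, f i‖ₑ = ∏ i ∈ s, ‖f i‖ₑ := by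
  simp only [enorm_eq_nnnorm, nnnorm_prod, ENNReal.ofNNReal_finsetProd]

/-- The pairs of a base point and an increment along which a function on `K` can be differenced. -/
def incrementPairs {E : Type*} [Add E] (K : Set E) : Set (E × E) :=
  {p | p.1 ∈ K ∧ p.1 + p.2 ∈ K}

section HolderENorm

variable {E F : Type*} [NormedAddCommGroup E] [SeminormedAddCommGroup F]

open Classical in
/-- The Hölder quotient of `f` between `y` and `y + h`; for `h = 0` it is defined to be the size of
`f y`, so that the sup norm and the Hölder seminorm become a single supremum. -/
noncomputable def holderQuotient (γ : ℝ) (f : E → F) (y h : E) : ℝ≥0∞ :=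
  if h = 0 then ‖f y‖ₑ else ‖f (y + h) - f y‖ₑ / ‖h‖ₑ ^ γ

/-- The `γ`-Hölder norm on `K`, valued in `[0,∞]`: the larger one of the sup norm and the Hölder
seminorm. -/
noncomputable def holderENorm (K : Set E) (γ : ℝ) (f : E → F) : ℝ≥0∞ :=
  ⨆ p : incrementPairs K, holderQuotient γ f p.1.1 p.1.2

theorem holderQuotient_le_holderENorm {K : Set E} (γ : ℝ) (f : E → F) {y h : E}
    (hy : y ∈ K) (hyh : y + h ∈ K) : holderQuotient γ f y h ≤ holderENorm K γ f :=
  le_iSup (fun p : incrementPairs K => holderQuotient γ f p.1.1 p.1.2) ⟨(y, h), hy, hyh⟩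

theorem holderENorm_eq_max (K : Set E) (γ : ℝ) (f : E → F) :
    holderENorm K γ f = max (⨆ y ∈ K, ‖f y‖ₑ)
      (⨆ y ∈ K, ⨆ y' ∈ K, ⨆ (_ : y ≠ y'), ‖f y - f y'‖ₑ / ‖y - y'‖ₑ ^ γ) := by
  apply le_antisymm
  · refine iSup_le fun ⟨⟨y, h⟩, hy, hyh⟩ => ?_
    by_cases hh : h = 0
    · refine le_max_of_le_left (le_iSup₂_of_le y hy ?_)
      simp [holderQuotient, hh]
    · refine le_max_of_le_right (le_iSup₂_of_le (y + h) hyh <| le_iSup₂_of_le y hy <|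
        le_iSup_of_le (add_ne_left.mpr hh) ?_)
      simp [holderQuotient, hh]
  · refine max_le (iSup₂_le fun y hy => ?_)
      (iSup₂_le fun y hy => iSup₂_le fun y' hy' => iSup_le fun hne => ?_)
    · simpa [holderQuotient] using
        holderQuotient_le_holderENorm γ f hy (h := 0) (by rwa [add_zero])
    · simpa [holderQuotient, sub_eq_zero, hne] using
        holderQuotient_le_holderENorm γ f hy' (h := y - y') (by rwa [add_sub_cancel])

end HolderENorm

section MixedDifference

variable {ι : Type*} [DecidableEq ι] {E : ι → Type*} [∀ i, AddZeroClass (E i)]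

/-- The mixed difference `Δ_T^h φ (y)`. The subtraction of cardinalities is never truncated, as
`S ⊆ T`. -/
def mixedDiff {R : Type*} [Ring R] (T : Finset ι) (h : ∀ i, E i) (φ : (∀ i, E i) → R)
    (y : ∀ i, E i) : R :=
  ∑ S ∈ T.powerset, (-1) ^ (T.card - S.card) * φ (fun i => y i + if i ∈ S then h i else 0)

theorem mixedDiff_prod [Fintype ι] {R : Type*} [CommRing R] (T : Finset ι) (h : ∀ i, E i)
    (u : ∀ i, E i → R) (y : ∀ i, E i) :
    mixedDiff T h (fun z => ∏ i, u i (z i)) y =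
      ∏ i, if i ∈ T then u i (y i + h i) - u i (y i) else u i (y i) := by
  have prod_shift (S : Finset ι) (hS : S ⊆ T) :
      ∏ i, u i (y i + if i ∈ S then h i else 0) =
        (∏ i ∈ S, u i (y i + h i)) * (∏ i ∈ T \ S, u i (y i)) * ∏ i ∈ Tᶜ, u i (y i) := by
    have shift_of_notMem {i : ι} (hi : i ∉ S) :
        u i (y i + if i ∈ S then h i else 0) = u i (y i) := by rw [if_neg hi, add_zero]
    rw [← prod_mul_prod_compl T, ← prod_sdiff hS, mul_comm (∏ i ∈ T \ S, _)]
    refine congrArg₂ (· * ·) (congrArg₂ (· * ·) ?_ ?_) ?_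
    · exact prod_congr rfl fun i hi => by rw [if_pos hi]
    · exact prod_congr rfl fun i hi => shift_of_notMem (mem_sdiff.mp hi).2
    · exact prod_congr rfl fun i hi => shift_of_notMem fun hiS => mem_compl.mp hi (hS hiS)
  rw [mixedDiff, ← prod_mul_prod_compl T, prod_ite_of_true (by simp), prod_ite_of_false (by simp)]
  simp only [sub_eq_add_neg, prod_add, prod_neg, sum_mul]
  refine sum_congr rfl fun S hS => ?_
  rw [mem_powerset] at hS
  rw [prod_shift S hS, card_sdiff_of_subset hS]
  ring

end MixedDifference

open Classical in
/-- The set of coordinates with a nonzero increment. -/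
noncomputable def incrementSupport {ι : Type*} [Fintype ι] {E : ι → Type*} [∀ i, Zero (E i)]
    (h : ∀ i, E i) : Finset ι :=
  {i | h i ≠ 0}

theorem mem_incrementSupport {ι : Type*} [Fintype ι] {E : ι → Type*} [∀ i, Zero (E i)]
    {h : ∀ i, E i} {i : ι} : i ∈ incrementSupport h ↔ h i ≠ 0 := by
  simp [incrementSupport]

section MixedHolderENorm

variable {ι : Type*} [Fintype ι] [DecidableEq ι] {E : ι → Type*}
  [∀ i, NormedAddCommGroup (E i)] {R : Type*}

/-- The quotient of the mixed difference of `φ` in the direction of all nonzero increments. It is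
the size of `φ y` for `h = 0`, so that the sup norm and the mixed Hölder seminorm become a single
supremum. -/
noncomputable def mixedHolderQuotient [SeminormedRing R] (γ : ℝ) (φ : (∀ i, E i) → R)
    (y h : ∀ i, E i) : ℝ≥0∞ :=
  ‖mixedDiff (incrementSupport h) h φ y‖ₑ / ∏ i ∈ incrementSupport h, ‖h i‖ₑ ^ γ

/-- The mixed `γ`-Hölder norm on `∏ i, K i`, valued in `[0,∞]`: the larger one of the sup norm and
the mixed Hölder seminorm. -/
noncomputable def mixedHolderENorm [SeminormedRing R] (K : ∀ i, Set (E i)) (γ : ℝ)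
    (φ : (∀ i, E i) → R) : ℝ≥0∞ :=
  ⨆ p : ∀ i, incrementPairs (K i), mixedHolderQuotient γ φ (fun i => (p i).1.1) fun i => (p i).1.2

theorem mixedHolderQuotient_le_mixedHolderENorm [SeminormedRing R] {K : ∀ i, Set (E i)} (γ : ℝ)
    (φ : (∀ i, E i) → R) {y h : ∀ i, E i} (hy : ∀ i, y i ∈ K i) (hyh : ∀ i, y i + h i ∈ K i) :
    mixedHolderQuotient γ φ y h ≤ mixedHolderENorm K γ φ :=
  le_iSup (fun p : ∀ i, incrementPairs (K i) =>
    mixedHolderQuotient γ φ (fun i => (p i).1.1) fun i => (p i).1.2)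
    fun i => ⟨(y i, h i), hy i, hyh i⟩

theorem mixedHolderENorm_eq_max [SeminormedRing R] (K : ∀ i, Set (E i)) (γ : ℝ)
    (φ : (∀ i, E i) → R) :
    mixedHolderENorm K γ φ = max (⨆ y : ∀ i, E i, ⨆ (_ : ∀ i, y i ∈ K i), ‖φ y‖ₑ)
      (⨆ T : Finset ι, ⨆ (_ : T.Nonempty), ⨆ y : ∀ i, E i, ⨆ h : ∀ i, E i,
        ⨆ (_ : ∀ i, y i ∈ K i), ⨆ (_ : ∀ i ∈ T, h i ≠ 0), ⨆ (_ : ∀ i ∉ T, h i = 0),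
        ⨆ (_ : ∀ i, y i + h i ∈ K i), ‖mixedDiff T h φ y‖ₑ / ∏ i ∈ T, ‖h i‖ₑ ^ γ) := by
  apply le_antisymm
  · refine iSup_le fun p => ?_
    set y : ∀ i, E i := fun i => (p i).1.1
    set h : ∀ i, E i := fun i => (p i).1.2
    have hy : ∀ i, y i ∈ K i := fun i => (p i).2.1
    have hyh : ∀ i, y i + h i ∈ K i := fun i => (p i).2.2
    rcases (incrementSupport h).eq_empty_or_nonempty with hempty | hnonempty
    · refine le_max_of_le_left (le_iSup₂_of_le y hy ?_)
      simp [mixedHolderQuotient, hempty, mixedDiff]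
    · refine le_max_of_le_right (le_iSup₂_of_le _ hnonempty <| le_iSup₂_of_le y h <|
        le_iSup₂_of_le hy (fun i => mem_incrementSupport.mp) <|
        le_iSup₂_of_le (fun i hi => ?_) hyh le_rfl)
      simpa only [mem_incrementSupport, not_not] using hi
  · refine max_le (iSup₂_le fun y hy => ?_) (iSup₂_le fun T _ => iSup₂_le fun y h =>
      iSup₂_le fun hy hT => iSup₂_le fun hT' hyh => ?_)
    · simpa [mixedHolderQuotient, mixedDiff, incrementSupport] using
        mixedHolderQuotient_le_mixedHolderENorm γ φ hy (h := 0) (by simpa using hy)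
    · have hsupport : incrementSupport h = T := by
        ext i
        rw [mem_incrementSupport]
        exact ⟨not_imp_comm.mp (hT' i), hT i⟩
      simpa only [mixedHolderQuotient, hsupport] using
        mixedHolderQuotient_le_mixedHolderENorm γ φ hy hyh

variable [SeminormedCommRing R] [NormMulClass R] [NormOneClass R]

theorem mixedHolderQuotient_prod (γ : ℝ) (u : ∀ i, E i → R) (y h : ∀ i, E i) :
    mixedHolderQuotient γ (fun z => ∏ i, u i (z i)) y h =
      ∏ i, holderQuotient γ (u i) (y i) (h i) := by
  have weight_ne_zero (i : ι) : (if i ∈ incrementSupport h then ‖h i‖ₑ ^ γ else 1) ≠ 0 := by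
    split_ifs with hi
    · rw [mem_incrementSupport, ← enorm_pos] at hi
      exact (ENNReal.rpow_pos hi enorm_ne_top).ne'
    · exact one_ne_zero
  rw [mixedHolderQuotient, mixedDiff_prod, enorm_finsetProd,
    ← prod_ite_mem_eq (incrementSupport h),
    ← ENNReal.prod_div_distrib_of_ne_zero fun i _ => weight_ne_zero i]
  refine prod_congr rfl fun i _ => ?_
  by_cases hi : h i = 0 <;> simp [holderQuotient, mem_incrementSupport, hi]

theorem stmt_4_general (K : ∀ i, Set (E i)) (γ : ℝ) (u : ∀ i, E i → R) :
    mixedHolderENorm K γ (fun y => ∏ i, u i (y i)) = ∏ i, holderENorm (K i) γ (u i) := by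
  simp only [mixedHolderENorm, holderENorm, mixedHolderQuotient_prod]
  exact (prod_iSup_eq_iSup_prod fun i (p : incrementPairs (K i)) =>
    holderQuotient γ (u i) p.1.1 p.1.2).symm

end MixedHolderENorm

theorem holderNormR_eq_holderENorm {d : ℕ} (D : Set (EuclideanSpace ℝ (Fin d))) (γ : ℝ)
    (u : EuclideanSpace ℝ (Fin d) → ℝ) : holderNormR D γ u = holderENorm (closure D) γ u :=
  (holderENorm_eq_max (closure D) γ u).symm

theorem mixedHolderNormR_eq_mixedHolderENorm {d k : ℕ} (D : Set (EuclideanSpace ℝ (Fin d)))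
    (γ : ℝ) (u : (Fin k → EuclideanSpace ℝ (Fin d)) → ℝ) :
    mixedHolderNormR D γ u = mixedHolderENorm (fun _ => closure D) γ u :=
  (mixedHolderENorm_eq_max (fun _ => closure D) γ u).symm

/-- the mixed Hölder norm of a tensor product
`u(y_1,…,y_k) = ∏_ℓ u_ℓ(y_ℓ)` equals the product of the Hölder norms of the factors. -/
theorem stmt_4 {d k : ℕ} (hk : 1 ≤ k) (D : Set (EuclideanSpace ℝ (Fin d)))
    (hD : Bornology.IsBounded D)
    (γ : ℝ) (hγ0 : 0 < γ) (hγ1 : γ ≤ 1)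
    (u : Fin k → EuclideanSpace ℝ (Fin d) → ℝ)
    (hu : ∀ ℓ, holderNormR D γ (u ℓ) < ⊤) :
    mixedHolderNormR D γ (fun y => ∏ ℓ, u ℓ (y ℓ)) = ∏ ℓ, holderNormR D γ (u ℓ) := by
  simp only [holderNormR_eq_holderENorm, mixedHolderNormR_eq_mixedHolderENorm]
  exact stmt_4_general (fun _ => closure D) γ u
end

section
/- Let D ⊂ ℝ^d be a nonempty bounded convex open set with closure K, let 0 < γ ≤ 1 and let p be a real number with p > 2d/γ. There exists a constant C > 0, depending only on d, p, γ and D, such that for every continuous function f : K × K → ℝ with finite L^p-valued Hölder seminorm [f] := sup_{y ≠ y' ∈ K} (∫_D |f(x,y) − f(x,y')|^p dx)^{1/p} / ‖y − y'‖^γ, the diagonal trace x ↦ f(x,x) satisfies (∫_D |f(x,x)|^p dx)^{1/p} ≤ C · max{ sup_{y∈K} (∫_D |f(x,y)|^p dx)^{1/p} , [f] }. -/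
open MeasureTheory

/-!
Let `P` be the normalised Haar measure on `D`. As `D` is convex, a homothety with centre `x ∈ D` and
ratio `t ≤ 1` maps `D` into itself and pushes `P` to a measure that is at most `t ^ (-d) P`.
Telescoping the functions `z ↦ u (x + 2 ^ (-k) (z - x))` in `L^p(P)` bounds `‖u x‖`, uniformly in
`x ∈ D`, by `‖u‖_{L^p(P)}` plus a series whose `k`-th term is the `L^p` mean of the increments
`u y - u y'` over pairs at distance `≲ 2 ^ (-k)`. For random `u`, Minkowski's inequality and
Tonelli's theorem bring the `L^p` norm in the random parameter inside: the `p`-th power of the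
`k`-th term is then at most a constant times `2 ^ (2kd)` (two inverse Jacobians) times `2 ^ (-kd)`
(the mass of the pairs) times `2 ^ (-kγp)` (Hölder continuity), so the series is geometric when
`p > d / γ`. The diagonal is the case where the random parameter is a point of `D` itself and
`u = f x`, since `‖f x x‖ ≤ ⨆ y ∈ D, ‖f x y‖`.
-/

open Filter Topology AffineMap Module ProbabilityTheory
open scoped ENNReal

section LpNorm

variable {α β F : Type*} [MeasurableSpace α] [MeasurableSpace β] [NormedAddCommGroup F]
  {μ : Measure α} {ν : Measure β} {p : ℝ≥0∞}

lemma eLpNorm_rpow_eq_lintegral {ε : Type*} [ENorm ε] (hp0 : p ≠ 0) (hp : p ≠ ∞) (g : α → ε) :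
    eLpNorm g p μ ^ p.toReal = ∫⁻ x, ‖g x‖ₑ ^ p.toReal ∂μ := by
  rw [eLpNorm_eq_lintegral_rpow_enorm_toReal hp0 hp, one_div,
    ENNReal.rpow_inv_rpow (ENNReal.toReal_pos hp0 hp).ne']

lemma eLpNorm_tsum_le {g : ℕ → α → ℝ≥0∞} (hg : ∀ k, AEMeasurable (g k) μ) (hp1 : 1 ≤ p)
    (hp : p ≠ ∞) : eLpNorm (fun x => ∑' k, g k x) p μ ≤ ∑' k, eLpNorm (g k) p μ := by
  have hp0 : p ≠ 0 := (zero_lt_one.trans_le hp1).ne'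
  have hpos : 0 < p.toReal := ENNReal.toReal_pos hp0 hp
  have partial_le (n : ℕ) : eLpNorm (fun x => ∑ k ∈ Finset.range n, g k x) p μ
      ≤ ∑' k, eLpNorm (g k) p μ := by
    rw [← Finset.sum_fn]
    exact (eLpNorm_sum_le (fun k _ => (hg k).aestronglyMeasurable) hp1).trans
      (ENNReal.sum_le_tsum _)
  have lim (x : α) : Tendsto (fun n => ‖∑ k ∈ Finset.range n, g k x‖ₑ ^ p.toReal) atTop
      (𝓝 (‖∑' k, g k x‖ₑ ^ p.toReal)) :=
    (ENNReal.continuous_rpow_const.tendsto _).comp ENNReal.summable.hasSum.tendsto_sum_nat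
  rw [← ENNReal.rpow_le_rpow_iff hpos, eLpNorm_rpow_eq_lintegral hp0 hp]
  calc ∫⁻ x, ‖∑' k, g k x‖ₑ ^ p.toReal ∂μ
      = ∫⁻ x, liminf (fun n => ‖∑ k ∈ Finset.range n, g k x‖ₑ ^ p.toReal) atTop ∂μ :=
        lintegral_congr fun x => (lim x).liminf_eq.symm
    _ ≤ liminf (fun n => ∫⁻ x, ‖∑ k ∈ Finset.range n, g k x‖ₑ ^ p.toReal ∂μ) atTop :=
        lintegral_liminf_le' fun n =>
          (Finset.aemeasurable_fun_sum _ fun k _ => hg k).pow_const _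
    _ ≤ (∑' k, eLpNorm (g k) p μ) ^ p.toReal := by
        refine liminf_le_of_frequently_le' (Frequently.of_forall fun n => ?_)
        rw [← eLpNorm_rpow_eq_lintegral hp0 hp]
        gcongr
        exact partial_le n

lemma aemeasurable_eLpNorm_prod_right [SFinite ν] {f : α → β → F}
    (hf : AEStronglyMeasurable (Function.uncurry f) (μ.prod ν)) (hp : p ≠ ∞) :
    AEMeasurable (fun x => eLpNorm (f x) p ν) μ := by
  rcases eq_or_ne p 0 with rfl | hp0
  · simp
  simp only [eLpNorm_eq_lintegral_rpow_enorm_toReal hp0 hp]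
  exact (hf.enorm.pow_const p.toReal).lintegral_prod_right'.pow_const _

lemma aestronglyMeasurable_uncurry_sub_restrict [SFinite μ] [SFinite ν] {f : α → β → F}
    (hf : AEStronglyMeasurable (Function.uncurry f) (μ.prod ν)) (s : Set (β × β)) :
    AEStronglyMeasurable (Function.uncurry fun x (q : β × β) => f x q.1 - f x q.2)
      (μ.prod ((ν.prod ν).restrict s)) := by
  have hfst : AEStronglyMeasurable (fun z : α × β × β => f z.1 z.2.1) (μ.prod (ν.prod ν)) :=
    hf.comp_quasiMeasurePreserving (QuasiMeasurePreserving.prodMap (.id μ)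
      Measure.quasiMeasurePreserving_fst)
  have hsnd : AEStronglyMeasurable (fun z : α × β × β => f z.1 z.2.2) (μ.prod (ν.prod ν)) :=
    hf.comp_quasiMeasurePreserving (QuasiMeasurePreserving.prodMap (.id μ)
      Measure.quasiMeasurePreserving_snd)
  exact (hfst.sub hsnd).mono_measure (Measure.prod_mono le_rfl Measure.restrict_le_self)

lemma eLpNorm_eLpNorm_swap [SFinite μ] [SFinite ν] {f : α → β → F}
    (hf : AEStronglyMeasurable (Function.uncurry f) (μ.prod ν)) (hp : p ≠ ∞) :
    eLpNorm (fun x => eLpNorm (f x) p ν) p μ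
      = eLpNorm (fun y => eLpNorm (fun x => f x y) p μ) p ν := by
  rcases eq_or_ne p 0 with rfl | hp0
  · simp
  rw [eLpNorm_eq_lintegral_rpow_enorm_toReal hp0 hp, eLpNorm_eq_lintegral_rpow_enorm_toReal hp0 hp]
  simp only [enorm_eq_self, eLpNorm_rpow_eq_lintegral hp0 hp]
  rw [lintegral_lintegral_swap (hf.enorm.pow_const p.toReal)]

lemma eLpNorm_eLpNorm_le_of_forall_ae_le [SFinite μ] [SFinite ν] {f : α → β → F}
    (hf : AEStronglyMeasurable (Function.uncurry f) (μ.prod ν)) (hp : p ≠ ∞) {A : ℝ≥0∞}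
    (hA : ∀ᵐ y ∂ν, eLpNorm (fun x => f x y) p μ ≤ A) :
    eLpNorm (fun x => eLpNorm (f x) p ν) p μ ≤ A * ν Set.univ ^ p.toReal⁻¹ := by
  rw [eLpNorm_eLpNorm_swap hf hp]
  exact eLpNorm_le_of_ae_enorm_bound hA

lemma eLpNorm_le_eLpNorm_add_eLpNorm_prod_sub [IsProbabilityMeasure μ] [IsProbabilityMeasure ν]
    {f : α → F} {g : β → F} (hf : AEStronglyMeasurable f μ) (hg : AEStronglyMeasurable g ν)
    (hp : 1 ≤ p) :
    eLpNorm g p ν ≤ eLpNorm f p μ + eLpNorm (fun z => f z.1 - g z.2) p (μ.prod ν) := by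
  have hf' : AEStronglyMeasurable (f ∘ Prod.fst) (μ.prod ν) := hf.comp_fst
  have hg' : AEStronglyMeasurable (g ∘ Prod.snd) (μ.prod ν) := hg.comp_snd
  calc eLpNorm g p ν = eLpNorm (g ∘ Prod.snd) p (μ.prod ν) :=
        (eLpNorm_comp_measurePreserving hg measurePreserving_snd).symm
    _ = eLpNorm (f ∘ Prod.fst - (f ∘ Prod.fst - g ∘ Prod.snd)) p (μ.prod ν) := by
        rw [sub_sub_cancel]
    _ ≤ eLpNorm (f ∘ Prod.fst) p (μ.prod ν) +
          eLpNorm (f ∘ Prod.fst - g ∘ Prod.snd) p (μ.prod ν) :=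
        eLpNorm_sub_le hf' (hf'.sub hg') hp
    _ = eLpNorm f p μ + eLpNorm (fun z => f z.1 - g z.2) p (μ.prod ν) := by
        rw [eLpNorm_comp_measurePreserving hf measurePreserving_fst]
        rfl

end LpNorm

lemma le_add_tsum_of_succ_le_add {a b : ℕ → ℝ≥0∞} (h : ∀ k, a (k + 1) ≤ a k + b k) (n : ℕ) :
    a n ≤ a 0 + ∑' k, b k := by
  suffices a n ≤ a 0 + ∑ k ∈ Finset.range n, b k from
    this.trans (by gcongr; exact ENNReal.sum_le_tsum _)
  induction n with
  | zero => simp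
  | succ n ih =>
    rw [Finset.sum_range_succ, ← add_assoc]
    exact (h n).trans (by gcongr)


/-- The pairs of points at distance at most `r`: the region over which increments are averaged at
scale `r`. -/
def nearDiagonal (E : Type*) [PseudoMetricSpace E] (r : ℝ) : Set (E × E) :=
  {q | dist q.1 q.2 ≤ r}

lemma measurableSet_nearDiagonal {E : Type*} [PseudoMetricSpace E] [SecondCountableTopology E]
    [MeasurableSpace E] [OpensMeasurableSpace E] (r : ℝ) : MeasurableSet (nearDiagonal E r) :=
  measurableSet_le measurable_dist measurable_const

section Chaining

variable {E F : Type*} [NormedAddCommGroup E] [NormedSpace ℝ E]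
  [NormedAddCommGroup F] {D : Set E} {p : ℝ≥0∞}

lemma homothety_mem_of_convex (hconv : Convex ℝ D) {t : ℝ} (ht0 : 0 ≤ t) (ht1 : t ≤ 1) {x z : E}
    (hx : x ∈ D) (hz : z ∈ D) : homothety x t z ∈ D := by
  rw [homothety_eq_lineMap]
  exact hconv.lineMap_mem hx hz ⟨ht0, ht1⟩

lemma tendsto_comp_homothety_two_inv_pow (hconv : Convex ℝ D) {u : E → F} {x z : E} (hx : x ∈ D)
    (hz : z ∈ D) (hu : ContinuousWithinAt u D x) :
    Tendsto (fun k : ℕ => u (homothety x ((2⁻¹ : ℝ) ^ k) z)) atTop (𝓝 (u x)) := by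
  have ratio : Tendsto (fun k : ℕ => (2⁻¹ : ℝ) ^ k) atTop (𝓝 0) :=
    tendsto_pow_atTop_nhds_zero_of_lt_one (by norm_num) (by norm_num)
  have point : Tendsto (fun k : ℕ => homothety x ((2⁻¹ : ℝ) ^ k) z) atTop (𝓝 x) := by
    simpa [homothety_apply] using (ratio.smul_const (z - x)).add_const x
  refine hu.tendsto.comp (tendsto_nhdsWithin_iff.2 ⟨point, Eventually.of_forall fun k => ?_⟩)
  exact homothety_mem_of_convex hconv (by positivity)
    (pow_le_one₀ (by norm_num) (by norm_num)) hx hz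

lemma homothety_prodMk_mem_nearDiagonal (hD : Bornology.IsBounded D) {s t : ℝ} (hs : 0 ≤ s)
    (ht : 0 ≤ t) {x z z' : E} (hx : x ∈ D) (hz : z ∈ D) (hz' : z' ∈ D) :
    (homothety x s z, homothety x t z') ∈ nearDiagonal E ((s + t) * Metric.diam D) :=
  calc dist (homothety x s z) (homothety x t z')
      ≤ dist (homothety x s z) x + dist (homothety x t z') x := dist_triangle_right _ _ _
    _ = s * dist x z + t * dist x z' := by
        rw [dist_homothety_center, dist_homothety_center, Real.norm_of_nonneg hs,
          Real.norm_of_nonneg ht]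
    _ ≤ s * Metric.diam D + t * Metric.diam D := by
        gcongr <;> exact Metric.dist_le_diam_of_mem hD hx ‹_›
    _ = (s + t) * Metric.diam D := by ring

variable [MeasurableSpace E] [BorelSpace E] [FiniteDimensional ℝ E] (μ : Measure E)
  [μ.IsAddHaarMeasure]

lemma map_homothety_cond_le (hmeas : MeasurableSet D) (hconv : Convex ℝ D) {t : ℝ} (ht0 : 0 < t)
    (ht1 : t ≤ 1) {x : E} (hx : x ∈ D) :
    μ[|D].map (homothety x t) ≤ (ENNReal.ofReal t ^ finrank ℝ E)⁻¹ • μ[|D] := by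
  have hcont : Continuous (homothety x t) := homothety_continuous x t
  refine Measure.le_iff.2 fun A hA => ?_
  have image_subset : homothety x t '' (D ∩ homothety x t ⁻¹' A) ⊆ D ∩ A := by
    rintro _ ⟨z, ⟨hzD, hzA⟩, rfl⟩
    exact ⟨homothety_mem_of_convex hconv ht0.le ht1 hx hzD, hzA⟩
  have volume_scaling :
      ENNReal.ofReal t ^ finrank ℝ E * μ (D ∩ homothety x t ⁻¹' A) ≤ μ (D ∩ A) := by
    rw [← ENNReal.ofReal_pow ht0.le, ← abs_of_pos (pow_pos ht0 _), ← μ.addHaar_image_homothety x]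
    exact measure_mono image_subset
  rw [Measure.map_apply hcont.measurable hA, Measure.smul_apply, cond_apply hmeas, cond_apply hmeas,
    smul_eq_mul, mul_left_comm]
  gcongr
  rwa [← ENNReal.div_eq_inv_mul, ENNReal.le_div_iff_mul_le (by simp [ht0]) (by simp), mul_comm]

lemma map_prodMap_homothety_cond_le (hmeas : MeasurableSet D) (hconv : Convex ℝ D)
    (hD : Bornology.IsBounded D) {s t : ℝ} (hs0 : 0 < s) (hs1 : s ≤ 1) (ht0 : 0 < t) (ht1 : t ≤ 1)
    {x : E} (hx : x ∈ D) :
    (μ[|D].prod μ[|D]).map (Prod.map (homothety x s) (homothety x t)) ≤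
      ((ENNReal.ofReal s ^ finrank ℝ E)⁻¹ * (ENNReal.ofReal t ^ finrank ℝ E)⁻¹) •
        (μ[|D].prod μ[|D]).restrict (nearDiagonal E ((s + t) * Metric.diam D)) := by
  have hms : Measurable (homothety x s) := (homothety_continuous x s).measurable
  have hmt : Measurable (homothety x t) := (homothety_continuous x t).measurable
  have supported : ∀ᵐ q ∂(μ[|D].prod μ[|D]).map (Prod.map (homothety x s) (homothety x t)),
      q ∈ nearDiagonal E ((s + t) * Metric.diam D) := by
    refine (ae_map_iff (hms.prodMap hmt).aemeasurable (measurableSet_nearDiagonal _)).2 ?_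
    filter_upwards [Measure.quasiMeasurePreserving_fst.ae (ae_cond_mem hmeas),
      Measure.quasiMeasurePreserving_snd.ae (ae_cond_mem hmeas)] with z hz hz'
    exact homothety_prodMk_mem_nearDiagonal hD hs0.le ht0.le hx hz hz'
  rw [← Measure.restrict_eq_self_of_ae_mem supported, ← Measure.restrict_smul]
  refine Measure.restrict_mono le_rfl ?_
  rw [← Measure.map_prod_map _ _ hms hmt, ← smul_smul, ← Measure.prod_smul_right,
    ← Measure.prod_smul_left]
  gcongr
  · exact map_homothety_cond_le μ hmeas hconv hs0 hs1 hx
  · exact map_homothety_cond_le μ hmeas hconv ht0 ht1 hx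

lemma cond_prod_cond_nearDiagonal_le (hmeas : MeasurableSet D) (h0 : μ D ≠ 0) (htop : μ D ≠ ∞)
    {r : ℝ} (hr : 0 ≤ r) :
    (μ[|D].prod μ[|D]) (nearDiagonal E r) ≤
      ENNReal.ofReal r ^ finrank ℝ E * (μ (Metric.ball 0 1) / μ D) := by
  have := cond_isProbabilityMeasure_of_finite h0 htop
  have fiber (y : E) : Prod.mk y ⁻¹' nearDiagonal E r = Metric.closedBall y r := by
    ext y'
    simp [nearDiagonal, dist_comm]
  calc (μ[|D].prod μ[|D]) (nearDiagonal E r)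
      = ∫⁻ y, μ[|D] (Metric.closedBall y r) ∂μ[|D] := by
        simp only [Measure.prod_apply (measurableSet_nearDiagonal r), fiber]
    _ ≤ ∫⁻ _, (μ D)⁻¹ * (ENNReal.ofReal r ^ finrank ℝ E * μ (Metric.ball 0 1)) ∂μ[|D] := by
        refine lintegral_mono fun y => ?_
        rw [cond_apply hmeas, ← ENNReal.ofReal_pow hr, ← μ.addHaar_closedBall y hr]
        gcongr
        exact Set.inter_subset_right
    _ = ENNReal.ofReal r ^ finrank ℝ E * (μ (Metric.ball 0 1) / μ D) := by
        rw [lintegral_const, measure_univ, mul_one, ENNReal.div_eq_inv_mul, mul_left_comm]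

/-- The normalised `L^p` oscillation at scale `t`: the `L^p` norm of `u y - u y'` over the pairs in
`D × D` at distance at most `(t + t / 2) * diam D`, times the `p`-th root of the inverse Jacobians
of two homotheties of ratios `t` and `t / 2`. -/
noncomputable def scaleOscillation (D : Set E) (p : ℝ≥0∞) (u : E → F) (t : ℝ) : ℝ≥0∞ :=
  ((ENNReal.ofReal t ^ finrank ℝ E)⁻¹ * (ENNReal.ofReal (t / 2) ^ finrank ℝ E)⁻¹) ^ p.toReal⁻¹ *
    eLpNorm (fun q : E × E => u q.1 - u q.2) p
      ((μ[|D].prod μ[|D]).restrict (nearDiagonal E ((t + t / 2) * Metric.diam D)))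

lemma eLpNorm_homothety_sub_le_scaleOscillation (hmeas : MeasurableSet D) (hconv : Convex ℝ D)
    (hD : Bornology.IsBounded D) (hp : p ≠ ∞) {u : E → F} (hu : AEStronglyMeasurable u μ[|D])
    {t : ℝ} (ht0 : 0 < t) (ht1 : t ≤ 1) {x : E} (hx : x ∈ D) :
    eLpNorm (fun z => u (homothety x t z.1) - u (homothety x (t / 2) z.2)) p (μ[|D].prod μ[|D])
      ≤ scaleOscillation μ D p u t := by
  have hT : Measurable (Prod.map (homothety x t) (homothety x (t / 2))) :=
    (homothety_continuous x t).measurable.prodMap (homothety_continuous x (t / 2)).measurable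
  have hle := map_prodMap_homothety_cond_le μ hmeas hconv hD ht0 ht1 (half_pos ht0)
    ((half_le_self ht0.le).trans ht1) hx
  have hsub : AEStronglyMeasurable (fun q : E × E => u q.1 - u q.2) (μ[|D].prod μ[|D]) :=
    hu.comp_fst.sub hu.comp_snd
  calc eLpNorm (fun z => u (homothety x t z.1) - u (homothety x (t / 2) z.2)) p
        (μ[|D].prod μ[|D])
      = eLpNorm (fun q : E × E => u q.1 - u q.2) p
          ((μ[|D].prod μ[|D]).map (Prod.map (homothety x t) (homothety x (t / 2)))) :=
        (eLpNorm_map_measure ((hsub.restrict.smul_measure _).mono_measure hle) hT.aemeasurable).symm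
    _ ≤ _ := eLpNorm_mono_measure _ hle
    _ = scaleOscillation μ D p u t := by
        rw [eLpNorm_smul_measure_of_ne_top hp, smul_eq_mul, one_div, ENNReal.toReal_inv,
          scaleOscillation]

lemma aestronglyMeasurable_comp_homothety_cond (hmeas : MeasurableSet D) (hconv : Convex ℝ D)
    {u : E → F} (hu : AEStronglyMeasurable u μ[|D]) {t : ℝ} (ht0 : 0 < t) (ht1 : t ≤ 1)
    {x : E} (hx : x ∈ D) : AEStronglyMeasurable (fun z => u (homothety x t z)) μ[|D] :=
  ((hu.smul_measure _).mono_measure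
    (map_homothety_cond_le μ hmeas hconv ht0 ht1 hx)).comp_measurable
      (homothety_continuous x t).measurable

theorem enorm_le_eLpNorm_add_tsum_scaleOscillation (hmeas : MeasurableSet D) (hconv : Convex ℝ D)
    (hD : Bornology.IsBounded D) (h0 : μ D ≠ 0) (hp1 : 1 ≤ p) (hp : p ≠ ∞) {u : E → F}
    (hu : ContinuousOn u D) {x : E} (hx : x ∈ D) :
    ‖u x‖ₑ ≤ eLpNorm u p μ[|D] + ∑' k : ℕ, scaleOscillation μ D p u (2⁻¹ ^ k) := by
  have := cond_isProbabilityMeasure_of_finite h0 hD.measure_lt_top.ne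
  have hum : AEStronglyMeasurable u μ[|D] := (hu.aestronglyMeasurable hmeas).smul_measure _
  have ratio_pos (k : ℕ) : (0 : ℝ) < 2⁻¹ ^ k := by positivity
  have ratio_le_one (k : ℕ) : (2⁻¹ : ℝ) ^ k ≤ 1 := pow_le_one₀ (by norm_num) (by norm_num)
  have meas (k : ℕ) : AEStronglyMeasurable (fun z => u (homothety x ((2⁻¹ : ℝ) ^ k) z)) μ[|D] :=
    aestronglyMeasurable_comp_homothety_cond μ hmeas hconv hum (ratio_pos k) (ratio_le_one k) hx
  have step (k : ℕ) : eLpNorm (fun z => u (homothety x ((2⁻¹ : ℝ) ^ (k + 1)) z)) p μ[|D] ≤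
      eLpNorm (fun z => u (homothety x ((2⁻¹ : ℝ) ^ k) z)) p μ[|D] +
        scaleOscillation μ D p u (2⁻¹ ^ k) := by
    refine (eLpNorm_le_eLpNorm_add_eLpNorm_prod_sub (meas k) (meas (k + 1)) hp1).trans ?_
    gcongr
    rw [pow_succ, ← div_eq_mul_inv]
    exact eLpNorm_homothety_sub_le_scaleOscillation μ hmeas hconv hD hp hum (ratio_pos k)
      (ratio_le_one k) hx
  calc ‖u x‖ₑ = eLpNorm (fun _ : E => u x) p μ[|D] := by
        rw [eLpNorm_const _ (zero_lt_one.trans_le hp1).ne' (IsProbabilityMeasure.ne_zero _)]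
        simp
    _ ≤ liminf (fun k : ℕ => eLpNorm (fun z => u (homothety x ((2⁻¹ : ℝ) ^ k) z)) p μ[|D])
          atTop := by
        refine Lp.eLpNorm_lim_le_liminf_eLpNorm meas _ ?_
        filter_upwards [ae_cond_mem hmeas] with z hz
        exact tendsto_comp_homothety_two_inv_pow hconv hx hz (hu x hx)
    _ ≤ eLpNorm u p μ[|D] + ∑' k : ℕ, scaleOscillation μ D p u (2⁻¹ ^ k) := by
        refine liminf_le_of_frequently_le' (Frequently.of_forall fun k => ?_)
        simpa using le_add_tsum_of_succ_le_add step k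

end Chaining

section Constants

variable {E : Type*} [NormedAddCommGroup E] [NormedSpace ℝ E] [MeasurableSpace E] (μ : Measure E)
  (D : Set E) (γ : ℝ) (p : ℝ≥0∞)

/-- The scale-free factor in the bound for `scaleOscillation` of a random function that is
`γ`-Hölder with values in `L^p`. -/
noncomputable def oscillationConst : ℝ≥0∞ :=
  ENNReal.ofReal (3 / 2 * Metric.diam D) ^ γ *
    (2 ^ finrank ℝ E * ENNReal.ofReal (3 / 2 * Metric.diam D) ^ finrank ℝ E *
      (μ (Metric.ball 0 1) / μ D)) ^ p.toReal⁻¹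

/-- The constant in the maximal inequality `eLpNorm_iSup_enorm_le`: one term for the mean over `D`
and a series over the dyadic scales `2⁻¹ ^ k`. -/
noncomputable def maximalConst : ℝ≥0∞ :=
  1 + ∑' k : ℕ, oscillationConst μ D γ p *
    ENNReal.ofReal (2⁻¹ ^ k) ^ (γ - finrank ℝ E * p.toReal⁻¹)

lemma maximalConst_ne_zero : maximalConst μ D γ p ≠ 0 := by
  simp [maximalConst]

variable {μ D γ p} [FiniteDimensional ℝ E] [μ.IsAddHaarMeasure]

lemma oscillationConst_ne_top (h0 : μ D ≠ 0) (hγ : 0 ≤ γ) : oscillationConst μ D γ p ≠ ∞ := by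
  have hball : μ (Metric.ball 0 1) / μ D ≠ ∞ :=
    ENNReal.div_ne_top measure_ball_lt_top.ne h0
  have hexp : 0 ≤ p.toReal⁻¹ := by positivity
  unfold oscillationConst
  finiteness

lemma maximalConst_ne_top (h0 : μ D ≠ 0) (hγ : 0 < γ) (hp : finrank ℝ E / γ < p.toReal) :
    maximalConst μ D γ p ≠ ∞ := by
  have exponent_pos : 0 < γ - finrank ℝ E * p.toReal⁻¹ := by
    have hp0 : 0 < p.toReal := (by positivity : (0 : ℝ) ≤ finrank ℝ E / γ).trans_lt hp
    rwa [sub_pos, ← div_eq_mul_inv, div_lt_comm₀ hp0 hγ]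
  have geometric (k : ℕ) : ENNReal.ofReal (2⁻¹ ^ k) ^ (γ - finrank ℝ E * p.toReal⁻¹) =
      ((2⁻¹ : ℝ≥0∞) ^ (γ - finrank ℝ E * p.toReal⁻¹)) ^ k := by
    rw [ENNReal.ofReal_pow (by norm_num), ENNReal.ofReal_inv_of_pos two_pos, ENNReal.ofReal_ofNat,
      ← ENNReal.rpow_natCast, ← ENNReal.rpow_natCast, ← ENNReal.rpow_mul, ← ENNReal.rpow_mul,
      mul_comm]
  have ratio_lt_one : (2⁻¹ : ℝ≥0∞) ^ (γ - finrank ℝ E * p.toReal⁻¹) < 1 :=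
    ENNReal.rpow_lt_one (by simp) exponent_pos
  simp only [maximalConst, geometric, ENNReal.tsum_mul_left, ENNReal.tsum_geometric]
  exact ENNReal.add_ne_top.2 ⟨ENNReal.one_ne_top,
    ENNReal.mul_ne_top (oscillationConst_ne_top h0 hγ.le)
      (ENNReal.inv_ne_top.2 (tsub_pos_of_lt ratio_lt_one).ne')⟩

end Constants

lemma jacobian_mul_holder_mul_volume_eq {n : ℕ} {γ e : ℝ} (hγ : 0 ≤ γ) (he : 0 ≤ e)
    {t R m : ℝ≥0∞} (ht0 : t ≠ 0) (ht : t ≠ ∞) :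
    ((t ^ n)⁻¹ * ((t / 2) ^ n)⁻¹) ^ e * ((t * R) ^ γ * ((t * R) ^ n * m) ^ e) =
      R ^ γ * (2 ^ n * R ^ n * m) ^ e * t ^ (γ - n * e) := by
  have half : ((t / 2) ^ n)⁻¹ = 2 ^ n * (t ^ n)⁻¹ := by
    rw [ENNReal.div_eq_inv_mul, mul_pow, ENNReal.mul_inv (by simp) (by simp),
      ← ENNReal.inv_pow, inv_inv]
  have cancel : (t ^ n)⁻¹ * ((t / 2) ^ n)⁻¹ * ((t * R) ^ n * m) =
      (t ^ n)⁻¹ * (2 ^ n * R ^ n * m) := by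
    rw [half, mul_pow]
    calc _ = (t ^ n)⁻¹ * (2 ^ n * R ^ n * m) * ((t ^ n)⁻¹ * t ^ n) := by ring
      _ = _ := by rw [ENNReal.inv_mul_cancel (pow_ne_zero n ht0) (ENNReal.pow_ne_top ht), mul_one]
  have power : t ^ (γ - n * e) = t ^ γ * ((t ^ n)⁻¹) ^ e := by
    rw [sub_eq_add_neg, ENNReal.rpow_add _ _ ht0 ht, ENNReal.rpow_neg, ENNReal.rpow_mul,
      ENNReal.rpow_natCast, ENNReal.inv_rpow]
  calc _ = (t * R) ^ γ * ((t ^ n)⁻¹ * ((t / 2) ^ n)⁻¹ * ((t * R) ^ n * m)) ^ e := by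
        rw [ENNReal.mul_rpow_of_nonneg ((t ^ n)⁻¹ * ((t / 2) ^ n)⁻¹) _ he]
        ring
    _ = _ := by
        rw [cancel, ENNReal.mul_rpow_of_nonneg _ _ he, ENNReal.mul_rpow_of_nonneg _ _ hγ, power]
        ring

section Maximal

variable {Ω E F : Type*} [MeasurableSpace Ω] [NormedAddCommGroup E] [NormedSpace ℝ E]
  [MeasurableSpace E] [FiniteDimensional ℝ E] [NormedAddCommGroup F] {ρ : Measure Ω} [SFinite ρ]
  {μ : Measure E} {D : Set E} {γ : ℝ} {p : ℝ≥0∞} {X : Ω → E → F} {M : ℝ≥0∞}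

lemma aemeasurable_scaleOscillation (hp : p ≠ ∞)
    (hX : AEStronglyMeasurable (Function.uncurry X) (ρ.prod μ[|D])) (t : ℝ) :
    AEMeasurable (fun ω => scaleOscillation μ D p (X ω) t) ρ :=
  (aemeasurable_eLpNorm_prod_right
    (aestronglyMeasurable_uncurry_sub_restrict hX _) hp).const_mul _

variable [BorelSpace E] [μ.IsAddHaarMeasure]

lemma eLpNorm_eLpNorm_nearDiagonal_le (hmeas : MeasurableSet D) (h0 : μ D ≠ 0) (htop : μ D ≠ ∞)
    (hp : p ≠ ∞) (hγ : 0 ≤ γ) (hX : AEStronglyMeasurable (Function.uncurry X) (ρ.prod μ[|D]))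
    (hM : ∀ y ∈ D, ∀ y' ∈ D, eLpNorm (fun ω => X ω y - X ω y') p ρ ≤ M * ‖y - y'‖ₑ ^ γ)
    {r : ℝ} (hr : 0 ≤ r) :
    eLpNorm (fun ω => eLpNorm (fun q : E × E => X ω q.1 - X ω q.2) p
        ((μ[|D].prod μ[|D]).restrict (nearDiagonal E r))) p ρ ≤
      M * (ENNReal.ofReal r ^ γ *
        (ENNReal.ofReal r ^ finrank ℝ E * (μ (Metric.ball 0 1) / μ D)) ^ p.toReal⁻¹) := by
  have := cond_isProbabilityMeasure_of_finite h0 htop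
  have hmem : ∀ᵐ q ∂μ[|D].prod μ[|D], q.1 ∈ D ∧ q.2 ∈ D :=
    (Measure.quasiMeasurePreserving_fst.ae (ae_cond_mem hmeas)).and
      (Measure.quasiMeasurePreserving_snd.ae (ae_cond_mem hmeas))
  have increment_le : ∀ᵐ q ∂(μ[|D].prod μ[|D]).restrict (nearDiagonal E r),
      eLpNorm (fun ω => X ω q.1 - X ω q.2) p ρ ≤ M * ENNReal.ofReal r ^ γ := by
    filter_upwards [ae_restrict_of_ae hmem, ae_restrict_mem (measurableSet_nearDiagonal r)]
      with q hq hqr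
    refine (hM _ hq.1 _ hq.2).trans ?_
    gcongr
    rw [← ofReal_norm, ← dist_eq_norm]
    exact ENNReal.ofReal_le_ofReal hqr
  refine (eLpNorm_eLpNorm_le_of_forall_ae_le
    (aestronglyMeasurable_uncurry_sub_restrict hX _) hp increment_le).trans ?_
  rw [Measure.restrict_apply_univ, mul_assoc]
  gcongr
  exact cond_prod_cond_nearDiagonal_le μ hmeas h0 htop hr

lemma eLpNorm_scaleOscillation_le (hmeas : MeasurableSet D) (h0 : μ D ≠ 0) (htop : μ D ≠ ∞)
    (hp : p ≠ ∞) (hγ : 0 ≤ γ) (hX : AEStronglyMeasurable (Function.uncurry X) (ρ.prod μ[|D]))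
    (hM : ∀ y ∈ D, ∀ y' ∈ D, eLpNorm (fun ω => X ω y - X ω y') p ρ ≤ M * ‖y - y'‖ₑ ^ γ)
    {t : ℝ} (ht : 0 < t) :
    eLpNorm (fun ω => scaleOscillation μ D p (X ω) t) p ρ ≤
      oscillationConst μ D γ p * ENNReal.ofReal t ^ (γ - finrank ℝ E * p.toReal⁻¹) * M := by
  have radius : ENNReal.ofReal ((t + t / 2) * Metric.diam D) =
      ENNReal.ofReal t * ENNReal.ofReal (3 / 2 * Metric.diam D) := by
    rw [← ENNReal.ofReal_mul ht.le]
    ring_nf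
  have hr : 0 ≤ (t + t / 2) * Metric.diam D := by positivity
  have hbound := eLpNorm_eLpNorm_nearDiagonal_le hmeas h0 htop hp hγ hX hM hr
  rw [radius] at hbound
  calc eLpNorm (fun ω => scaleOscillation μ D p (X ω) t) p ρ
      ≤ ((ENNReal.ofReal t ^ finrank ℝ E)⁻¹ * (ENNReal.ofReal (t / 2) ^ finrank ℝ E)⁻¹) ^
          p.toReal⁻¹ * _ :=
        eLpNorm_le_mul_eLpNorm_of_ae_le_mul'' p
          (aemeasurable_eLpNorm_prod_right (aestronglyMeasurable_uncurry_sub_restrict hX _)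
            hp).aestronglyMeasurable (ae_of_all _ fun _ => le_rfl)
    _ ≤ _ := by grw [hbound]
    _ = M * (oscillationConst μ D γ p *
          ENNReal.ofReal t ^ (γ - finrank ℝ E * p.toReal⁻¹)) := by
        rw [mul_left_comm, oscillationConst, ENNReal.ofReal_div_of_pos two_pos,
          ENNReal.ofReal_ofNat, jacobian_mul_holder_mul_volume_eq hγ (by positivity) (by simpa)
            ENNReal.ofReal_ne_top]
    _ = _ := mul_comm _ _

theorem eLpNorm_iSup_enorm_le (hmeas : MeasurableSet D) (hconv : Convex ℝ D)
    (hD : Bornology.IsBounded D) (h0 : μ D ≠ 0) (hp1 : 1 ≤ p) (hp : p ≠ ∞) (hγ : 0 ≤ γ)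
    (hX : AEStronglyMeasurable (Function.uncurry X) (ρ.prod μ[|D]))
    (hcont : ∀ᵐ ω ∂ρ, ContinuousOn (X ω) D) (hsup : ∀ y ∈ D, eLpNorm (fun ω => X ω y) p ρ ≤ M)
    (hholder : ∀ y ∈ D, ∀ y' ∈ D,
      eLpNorm (fun ω => X ω y - X ω y') p ρ ≤ M * ‖y - y'‖ₑ ^ γ) :
    eLpNorm (fun ω => ⨆ y ∈ D, ‖X ω y‖ₑ) p ρ ≤ maximalConst μ D γ p * M := by
  have htop : μ D ≠ ∞ := hD.measure_lt_top.ne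
  have := cond_isProbabilityMeasure_of_finite h0 htop
  have pointwise : ∀ᵐ ω ∂ρ, ‖⨆ y ∈ D, ‖X ω y‖ₑ‖ₑ ≤
      ‖eLpNorm (X ω) p μ[|D] + ∑' k : ℕ, scaleOscillation μ D p (X ω) (2⁻¹ ^ k)‖ₑ := by
    filter_upwards [hcont] with ω hω
    exact iSup₂_le fun y hy =>
      enorm_le_eLpNorm_add_tsum_scaleOscillation μ hmeas hconv hD h0 hp1 hp hω hy
  have hmean : eLpNorm (fun ω => eLpNorm (X ω) p μ[|D]) p ρ ≤ M := by
    simpa using eLpNorm_eLpNorm_le_of_forall_ae_le hX hp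
      ((ae_cond_mem hmeas).mono fun y hy => hsup y hy)
  have hosc_meas (k : ℕ) : AEMeasurable (fun ω => scaleOscillation μ D p (X ω) (2⁻¹ ^ k)) ρ :=
    aemeasurable_scaleOscillation hp hX _
  calc eLpNorm (fun ω => ⨆ y ∈ D, ‖X ω y‖ₑ) p ρ
      ≤ _ := eLpNorm_mono_enorm_ae pointwise
    _ ≤ eLpNorm (fun ω => eLpNorm (X ω) p μ[|D]) p ρ +
          eLpNorm (fun ω => ∑' k : ℕ, scaleOscillation μ D p (X ω) (2⁻¹ ^ k)) p ρ :=
        eLpNorm_add_le (aemeasurable_eLpNorm_prod_right hX hp).aestronglyMeasurable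
          (AEMeasurable.tsum hosc_meas).aestronglyMeasurable hp1
    _ ≤ M + ∑' k : ℕ, oscillationConst μ D γ p *
          ENNReal.ofReal (2⁻¹ ^ k) ^ (γ - finrank ℝ E * p.toReal⁻¹) * M := by
        refine add_le_add hmean ((eLpNorm_tsum_le hosc_meas hp1 hp).trans ?_)
        gcongr with k
        exact eLpNorm_scaleOscillation_le hmeas h0 htop hp hγ hX hholder (by positivity)
    _ = maximalConst μ D γ p * M := by
        rw [maximalConst, add_mul, one_mul, ENNReal.tsum_mul_right]

end Maximal

section Diagonal

variable {E F : Type*} [NormedAddCommGroup E] [NormedSpace ℝ E] [FiniteDimensional ℝ E]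
  [MeasurableSpace E] [BorelSpace E] [NormedAddCommGroup F] {D : Set E} {ρ : Measure E}

theorem eLpNorm_diagonal_le [SFinite ρ] {μ : Measure E} [μ.IsAddHaarMeasure]
    (hmeas : MeasurableSet D) (hconv : Convex ℝ D) (hD : Bornology.IsBounded D) (h0 : μ D ≠ 0)
    {p : ℝ≥0∞} (hp1 : 1 ≤ p) (hp : p ≠ ∞) {γ : ℝ} (hγ : 0 ≤ γ) {f : E → E → F}
    (hf : ContinuousOn (Function.uncurry f) (D ×ˢ D)) {M : ℝ≥0∞}
    (hsup : ∀ y ∈ D, eLpNorm (fun x => f x y) p (ρ.restrict D) ≤ M)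
    (hholder : ∀ y ∈ D, ∀ y' ∈ D,
      eLpNorm (fun x => f x y - f x y') p (ρ.restrict D) ≤ M * ‖y - y'‖ₑ ^ γ) :
    eLpNorm (fun x => f x x) p (ρ.restrict D) ≤ maximalConst μ D γ p * M := by
  have hjoint : AEStronglyMeasurable (Function.uncurry f) ((ρ.restrict D).prod μ[|D]) := by
    rw [ProbabilityTheory.cond, Measure.prod_smul_right, Measure.prod_restrict]
    exact (hf.aestronglyMeasurable (hmeas.prod hmeas)).smul_measure _
  have hcont : ∀ᵐ x ∂ρ.restrict D, ContinuousOn (f x) D := by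
    filter_upwards [ae_restrict_mem hmeas] with x hx
    exact hf.uncurry_left x hx
  refine (eLpNorm_mono_enorm_ae ?_).trans
    (eLpNorm_iSup_enorm_le hmeas hconv hD h0 hp1 hp hγ hjoint hcont hsup hholder)
  filter_upwards [ae_restrict_mem hmeas] with x hx
  exact le_iSup₂ (f := fun y _ => ‖f x y‖ₑ) x hx

variable [IsFiniteMeasureOnCompacts ρ] {p : ℝ}

lemma eLpNorm_restrict_eq_ofReal_integral (hD : Bornology.IsBounded D) (hp : 0 < p) {φ : E → F}
    (hφ : ContinuousOn φ (closure D)) :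
    eLpNorm φ (ENNReal.ofReal p) (ρ.restrict D) =
      ENNReal.ofReal ((∫ x in D, ‖φ x‖ ^ p ∂ρ) ^ (1 / p)) := by
  obtain ⟨B, hB⟩ := hD.isCompact_closure.exists_bound_of_continuousOn hφ
  have : IsFiniteMeasure (ρ.restrict (closure D)) :=
    isFiniteMeasure_restrict.2 hD.isCompact_closure.measure_lt_top.ne
  have hmem : MemLp φ (ENNReal.ofReal p) (ρ.restrict (closure D)) :=
    .of_bound (hφ.aestronglyMeasurable isClosed_closure.measurableSet) B
      (ae_restrict_of_forall_mem isClosed_closure.measurableSet hB)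
  have hmem' : MemLp φ (ENNReal.ofReal p) (ρ.restrict D) :=
    hmem.mono_measure (Measure.restrict_mono subset_closure le_rfl)
  rw [hmem'.eLpNorm_eq_integral_rpow_norm (by simpa) ENNReal.ofReal_ne_top,
    ENNReal.toReal_ofReal hp.le, one_div]

theorem integral_diagonal_rpow_le (hmeas : MeasurableSet D) (hconv : Convex ℝ D)
    (hD : Bornology.IsBounded D) (hint : (interior D).Nonempty) {γ : ℝ} (hγ : 0 < γ) (hp1 : 1 ≤ p)
    (hp : finrank ℝ E / γ < p) {f : E → E → F}
    (hf : ContinuousOn (Function.uncurry f) (closure D ×ˢ closure D)) {M : ℝ}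
    (hsup : ∀ y ∈ D, (∫ x in D, ‖f x y‖ ^ p ∂ρ) ^ (1 / p) ≤ M)
    (hholder : ∀ y ∈ D, ∀ y' ∈ D,
      (∫ x in D, ‖f x y - f x y'‖ ^ p ∂ρ) ^ (1 / p) ≤ M * ‖y - y'‖ ^ γ) :
    (∫ x in D, ‖f x x‖ ^ p ∂ρ) ^ (1 / p) ≤
      (maximalConst Measure.addHaar D γ (ENNReal.ofReal p)).toReal * M := by
  have hp0 : 0 < p := zero_lt_one.trans_le hp1
  have h0 : Measure.addHaar D ≠ 0 := (Measure.measure_pos_of_nonempty_interior _ hint).ne'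
  have hC : maximalConst Measure.addHaar D γ (ENNReal.ofReal p) ≠ ∞ :=
    maximalConst_ne_top h0 hγ (by rwa [ENNReal.toReal_ofReal hp0.le])
  have hM : 0 ≤ M := by
    obtain ⟨y, hy⟩ := hint
    exact (by positivity : (0 : ℝ) ≤ _).trans (hsup y (interior_subset hy))
  have section_continuous {y : E} (hy : y ∈ D) : ContinuousOn (fun x => f x y) (closure D) :=
    hf.uncurry_right y (subset_closure hy)
  have diagonal_continuous : ContinuousOn (fun x => f x x) (closure D) :=
    hf.comp (continuous_id.prodMk continuous_id).continuousOn fun x hx => ⟨hx, hx⟩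
  rw [← ENNReal.ofReal_le_ofReal_iff (by positivity), ENNReal.ofReal_mul ENNReal.toReal_nonneg,
    ENNReal.ofReal_toReal hC, ← eLpNorm_restrict_eq_ofReal_integral hD hp0 diagonal_continuous]
  refine eLpNorm_diagonal_le hmeas hconv hD h0 (by simpa) ENNReal.ofReal_ne_top hγ.le
    (hf.mono (Set.prod_mono subset_closure subset_closure)) (fun y hy => ?_) fun y hy y' hy' => ?_
  · rw [eLpNorm_restrict_eq_ofReal_integral hD hp0 (section_continuous hy)]
    exact ENNReal.ofReal_le_ofReal (hsup y hy)
  · have increment_continuous : ContinuousOn (fun x => f x y - f x y') (closure D) :=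
      (section_continuous hy).sub (section_continuous hy')
    rw [eLpNorm_restrict_eq_ofReal_integral hD hp0 increment_continuous, ← ofReal_norm,
      ENNReal.ofReal_rpow_of_nonneg (norm_nonneg _) hγ.le, ← ENNReal.ofReal_mul hM]
    exact ENNReal.ofReal_le_ofReal (hholder y hy y' hy')

end Diagonal

theorem stmt_5_general {E F : Type*} [NormedAddCommGroup E] [NormedSpace ℝ E]
    [FiniteDimensional ℝ E] [MeasurableSpace E] [BorelSpace E] [NormedAddCommGroup F] {D : Set E}
    (hmeas : MeasurableSet D) (hint : (interior D).Nonempty) (hD : Bornology.IsBounded D)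
    (hconv : Convex ℝ D) {γ p : ℝ} (hγ0 : 0 < γ) (hγ1 : γ ≤ 1) (hp : finrank ℝ E / γ < p) :
    ∃ C > 0, ∀ (ρ : Measure E) [IsFiniteMeasureOnCompacts ρ] (f : E → E → F) (M1 M2 : ℝ),
      ContinuousOn (Function.uncurry f) (closure D ×ˢ closure D) →
      (∀ y ∈ D, (∫ x in D, ‖f x y‖ ^ p ∂ρ) ^ (1 / p) ≤ M1) →
      (∀ y ∈ D, ∀ y' ∈ D,
        (∫ x in D, ‖f x y - f x y'‖ ^ p ∂ρ) ^ (1 / p) ≤ M2 * ‖y - y'‖ ^ γ) →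
      (∫ x in D, ‖f x x‖ ^ p ∂ρ) ^ (1 / p) ≤ C * max M1 M2 := by
  rcases subsingleton_or_nontrivial E with _ | _
  · obtain ⟨y, hy⟩ := hint
    refine ⟨1, one_pos, fun ρ _ f M1 M2 _ hsup _ => ?_⟩
    simpa only [Subsingleton.elim _ y, one_mul] using
      (hsup y (interior_subset hy)).trans (le_max_left M1 M2)
  have hp1 : 1 ≤ p := by
    have : (1 : ℝ) ≤ finrank ℝ E := by exact_mod_cast finrank_pos
    exact ((one_le_div₀ hγ0).2 (hγ1.trans this)).trans hp.le
  have hC : maximalConst Measure.addHaar D γ (ENNReal.ofReal p) ≠ ∞ := maximalConst_ne_top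
    (Measure.measure_pos_of_nonempty_interior _ hint).ne' hγ0
    (by rwa [ENNReal.toReal_ofReal (zero_le_one.trans hp1)])
  refine ⟨_, ENNReal.toReal_pos (maximalConst_ne_zero _ _ _ _) hC,
    fun ρ _ f M1 M2 hf hsup hholder => ?_⟩
  refine integral_diagonal_rpow_le hmeas hconv hD hint hγ0 hp1 hp hf
    (fun y hy => (hsup y hy).trans (le_max_left _ _)) fun y hy y' hy' => ?_
  exact (hholder y hy y' hy').trans (by gcongr; exact le_max_right _ _)

/-- diagonal trace bound. For a nonempty bounded convex open `D ⊂ ℝ^d`,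
`0 < γ ≤ 1` and `p > 2d/γ`, there is `C > 0` (depending only on `d, p, γ, D`) such
that every continuous `f : K × K → ℝ` whose `L^p(D)`-valued sup norm in `y` is `≤ M1`
and whose `L^p(D)`-valued `γ`-Hölder seminorm in `y` is `≤ M2` satisfies
`‖f(·,·)|_diag‖_{L^p(D)} ≤ C max{M1, M2}`. -/
theorem stmt_5 {d : ℕ} (D : Set (EuclideanSpace ℝ (Fin d)))
    (hne : D.Nonempty) (hD : Bornology.IsBounded D) (hconv : Convex ℝ D)
    (hopen : IsOpen D)
    (γ p : ℝ) (hγ0 : 0 < γ) (hγ1 : γ ≤ 1) (hp : 2 * d / γ < p) :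
    ∃ C > 0, ∀ (f : EuclideanSpace ℝ (Fin d) → EuclideanSpace ℝ (Fin d) → ℝ)
      (M1 M2 : ℝ),
      ContinuousOn (fun z : EuclideanSpace ℝ (Fin d) × EuclideanSpace ℝ (Fin d) =>
        f z.1 z.2) (closure D ×ˢ closure D) →
      (∀ y ∈ closure D, (∫ x in D, |f x y| ^ p) ^ (1 / p) ≤ M1) →
      (∀ y ∈ closure D, ∀ y' ∈ closure D,
        (∫ x in D, |f x y - f x y'| ^ p) ^ (1 / p) ≤ M2 * ‖y - y'‖ ^ γ) →
      (∫ x in D, |f x x| ^ p) ^ (1 / p) ≤ C * max M1 M2 := by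
  have hp' : (finrank ℝ (EuclideanSpace ℝ (Fin d)) : ℝ) / γ < p := by
    rw [finrank_euclideanSpace_fin]
    exact lt_of_le_of_lt (by gcongr; linarith [d.cast_nonneg (α := ℝ)]) hp
  obtain ⟨C, hC, hbound⟩ := stmt_5_general (F := ℝ) hopen.measurableSet
    (hopen.interior_eq.symm ▸ hne) hD hconv hγ0 hγ1 hp'
  exact ⟨C, hC, fun f M1 M2 hf hsup hholder => hbound volume f M1 M2 hf
    (fun y hy => hsup y (subset_closure hy))
    fun y hy y' hy' => hholder y (subset_closure hy) y' (subset_closure hy')⟩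
end

section
/- Let D ⊂ ℝ^d be a nonempty bounded convex open set with closure K, let 0 < γ ≤ 1 and let p > 2d/γ be real. There exists a constant C > 0, depending only on d, p, γ and D, with the following property: for every continuous f : K × K × K → ℝ, written f(x, y_1, y_2), with finite mixed norm N := max{ sup_{y1,y2} ‖f(·,y1,y2)‖_{L^p(D)} , sup_{y1,y2,h1≠0} ‖f(·,y1+h1,y2)−f(·,y1,y2)‖_{L^p(D)}/‖h1‖^γ , sup_{y1,y2,h2≠0} ‖f(·,y1,y2+h2)−f(·,y1,y2)‖_{L^p(D)}/‖h2‖^γ , sup_{y1,y2,h1≠0,h2≠0} ‖f(·,y1+h1,y2+h2)−f(·,y1+h1,y2)−f(·,y1,y2+h2)+f(·,y1,y2)‖_{L^p(D)}/(‖h1‖^γ‖h2‖^γ) }, the partial diagonal trace g(x, y_2) := f(x, x, y_2) satisfies both sup_{y2 ∈ K} ‖g(·,y2)‖_{L^p(D)} ≤ C N and sup_{y2, h ≠ 0, y2+h ∈ K} ‖g(·,y2+h) − g(·,y2)‖_{L^p(D)} / ‖h‖^γ ≤ C N; i.e., the diagonal trace in the first two variables is a γ-Hölder L^p(D)-valued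 function of the remaining variable, with norm controlled by the mixed norm of f. -/
open MeasureTheory

/-!
Fix `y₂` and write `F x y = f x y y₂`. The trace is `F x x`, so `F x ·` has to be evaluated at a
point while it is only controlled in mean over `x`. The remedy is a Sobolev embedding in the
variable `y`, with a constant that does not depend on `x`.

For `ψ` continuous on `D` and `x ∈ D`, the homothetic copies `x + 2⁻ⁿ (D - x) ⊆ D` shrink to `x`.
Draw one point from each of two consecutive copies, independently: by Minkowski's inequality the
`L^p` distance from `ψ` to `ψ x` telescopes over these scales, and the `n`-th term is at most the
`p`-th root of an average of `|ψ u - ψ v| ^ p` over pairs at distance `O(2⁻ⁿ)`. Comparing that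
average with the Gagliardo energy of `ψ` costs a factor `2 ^ (2nd)` in the two changes of variables
and gains `2 ^ (-nq)` from the kernel `|u - v| ^ (-q)`, where `q = γ p > 2d`. The scales therefore
sum up to `|ψ x| ^ p ≲ ⨍ |ψ| ^ p + energy ψ`.

For `ψ = F x ·`, integrate this over `x` and exchange the integrals: the assumed `L^p` bounds are
uniform in the pair `(u, v)`. The same estimate for `f x y (y₂ + h) - f x y y₂` in place of `F x y`
gives the Hölder bound.
-/

open ProbabilityTheory Set Filter Module
open AffineMap (homothety)
open scoped ENNReal Topology

theorem le_tsum_of_le_add_succ_of_tendsto_zero {L δ : ℕ → ℝ≥0∞}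
    (hstep : ∀ n, L n ≤ δ n + L (n + 1)) (hL : Tendsto L atTop (𝓝 0)) : L 0 ≤ ∑' n, δ n := by
  have hpartial (n : ℕ) : L 0 ≤ (∑' k, δ k) + L n := by
    suffices L 0 ≤ ∑ k ∈ Finset.range n, δ k + L n from
      this.trans (by gcongr; exact ENNReal.sum_le_tsum _)
    induction n with
    | zero => simp
    | succ n ih =>
      rw [Finset.sum_range_succ, add_assoc]
      exact ih.trans (by gcongr; exact hstep n)
  exact ge_of_tendsto' (by simpa using hL.const_add (∑' k, δ k)) hpartial

section Lp

variable {α β V : Type*} [MeasurableSpace α] [MeasurableSpace β]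

theorem aemeasurable_of_continuousOn_of_ae_mem [TopologicalSpace α] [OpensMeasurableSpace α]
    [TopologicalSpace β] [BorelSpace β] {μ : Measure α} {s : Set α} {φ : α → β}
    (hφ : ContinuousOn φ s) (hs : MeasurableSet s) (hμ : ∀ᵐ a ∂μ, a ∈ s) : AEMeasurable φ μ := by
  rw [← Measure.restrict_eq_self_of_ae_mem hμ]
  exact hφ.aemeasurable hs

theorem ae_mem_prod {μ : Measure α} {ν : Measure β}
    {s : Set α} {t : Set β} (hμ : ∀ᵐ a ∂μ, a ∈ s) (hν : ∀ᵐ b ∂ν, b ∈ t) :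
    ∀ᵐ z ∂μ.prod ν, z ∈ s ×ˢ t :=
  (Measure.quasiMeasurePreserving_fst.ae hμ).and (Measure.quasiMeasurePreserving_snd.ae hν)

theorem lintegral_edist_rpow_le_add [PseudoMetricSpace V] {μ : Measure α} {ν : Measure β}
    [IsProbabilityMeasure μ] [IsProbabilityMeasure ν] {p : ℝ} (hp : 1 ≤ p) {a : α → V} {b : β → V}
    (ha : AEStronglyMeasurable a μ) (hb : AEStronglyMeasurable b ν) (c : V) :
    (∫⁻ u, edist (a u) c ^ p ∂μ) ^ (1 / p) ≤
      (∫⁻ u, ∫⁻ v, edist (a u) (b v) ^ p ∂ν ∂μ) ^ (1 / p) +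
        (∫⁻ v, edist (b v) c ^ p ∂ν) ^ (1 / p) := by
  have hab : AEMeasurable (fun z : α × β ↦ edist (a z.1) (b z.2)) (μ.prod ν) :=
    (continuous_edist.comp_aestronglyMeasurable (ha.comp_fst.prodMk hb.comp_snd)).aemeasurable
  have hbc : AEMeasurable (fun z : α × β ↦ edist (b z.2) c) (μ.prod ν) :=
    (continuous_edist.comp_aestronglyMeasurable
      (hb.comp_snd.prodMk aestronglyMeasurable_const)).aemeasurable
  calc (∫⁻ u, edist (a u) c ^ p ∂μ) ^ (1 / p)
      = (∫⁻ u, ∫⁻ _, edist (a u) c ^ p ∂ν ∂μ) ^ (1 / p) := by simp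
    _ ≤ (∫⁻ u, ∫⁻ v, (edist (a u) (b v) + edist (b v) c) ^ p ∂ν ∂μ) ^ (1 / p) := by
        gcongr
        exact edist_triangle _ _ _
    _ = (∫⁻ z, (edist (a z.1) (b z.2) + edist (b z.2) c) ^ p ∂μ.prod ν) ^ (1 / p) := by
        rw [lintegral_prod (fun z ↦ (edist (a z.1) (b z.2) + edist (b z.2) c) ^ p)
          ((hab.add hbc).pow_const p)]
    _ ≤ (∫⁻ z, edist (a z.1) (b z.2) ^ p ∂μ.prod ν) ^ (1 / p) +
          (∫⁻ z, edist (b z.2) c ^ p ∂μ.prod ν) ^ (1 / p) :=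
        ENNReal.lintegral_Lp_add_le hab hbc hp
    _ = _ := by
        rw [lintegral_prod _ (hab.pow_const p), lintegral_prod _ (hbc.pow_const p)]
        simp

theorem tendsto_lintegral_edist_rpow_of_tendstoUniformlyOn {ι : Type*} {l : Filter ι}
    [PseudoEMetricSpace V] {ν : Measure α} [IsProbabilityMeasure ν] {s : Set α}
    (hν : ∀ᵐ u ∂ν, u ∈ s) {p : ℝ} (hp : 0 < p) {φ : ι → α → V} {φ₀ : α → V}
    (hφ : TendstoUniformlyOn φ φ₀ l s) :
    Tendsto (fun i ↦ (∫⁻ u, edist (φ i u) (φ₀ u) ^ p ∂ν) ^ (1 / p)) l (𝓝 0) := by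
  refine ENNReal.tendsto_nhds_zero.2 fun ε hε ↦ ?_
  filter_upwards [EMetric.tendstoUniformlyOn_iff.1 hφ ε hε] with i hi
  calc (∫⁻ u, edist (φ i u) (φ₀ u) ^ p ∂ν) ^ (1 / p)
      ≤ (∫⁻ _, ε ^ p ∂ν) ^ (1 / p) := by
        gcongr ?_ ^ _
        refine lintegral_mono_ae (hν.mono fun u hu ↦ ?_)
        gcongr
        exact edist_comm (φ₀ u) _ ▸ (hi u hu).le
    _ = ε := by
        rw [lintegral_const, measure_univ, mul_one, one_div, ENNReal.rpow_rpow_inv hp.ne']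

theorem ofReal_mul_norm_rpow_rpow [SeminormedAddCommGroup V] {N γ p : ℝ} (hN : 0 ≤ N)
    (hγ : 0 ≤ γ) (hp : 0 ≤ p) (v : V) :
    ENNReal.ofReal ((N * ‖v‖ ^ γ) ^ p) = ENNReal.ofReal (N ^ p) * ‖v‖ₑ ^ (γ * p) := by
  rw [Real.mul_rpow hN (by positivity), ENNReal.ofReal_mul (by positivity),
    ← Real.rpow_mul (norm_nonneg _), ← ofReal_norm,
    ENNReal.ofReal_rpow_of_nonneg (norm_nonneg _) (by positivity)]

theorem integral_rpow_norm_rpow_le_iff [SeminormedAddCommGroup V] {μ : Measure α} {p a : ℝ}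
    (hp : 0 < p) (ha : 0 ≤ a) {φ : α → V} (hφ : Integrable (fun x ↦ ‖φ x‖ ^ p) μ) :
    (∫ x, ‖φ x‖ ^ p ∂μ) ^ (1 / p) ≤ a ↔ ∫⁻ x, ‖φ x‖ₑ ^ p ∂μ ≤ ENNReal.ofReal (a ^ p) := by
  have hφ₀ : 0 ≤ ∫ x, ‖φ x‖ ^ p ∂μ := integral_nonneg fun x ↦ by positivity
  have hlintegral : ∫⁻ x, ‖φ x‖ₑ ^ p ∂μ = ENNReal.ofReal (∫ x, ‖φ x‖ ^ p ∂μ) := by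
    rw [ofReal_integral_eq_lintegral_ofReal hφ (ae_of_all _ fun x ↦ by positivity)]
    simp only [← ENNReal.ofReal_rpow_of_nonneg (norm_nonneg _) hp.le, ofReal_norm]
  rw [hlintegral, ENNReal.ofReal_le_ofReal_iff (by positivity), one_div,
    Real.rpow_inv_le_iff_of_pos hφ₀ ha hp]

theorem integrable_norm_rpow_of_continuousOn [TopologicalSpace α] [OpensMeasurableSpace α]
    [SeminormedAddCommGroup V] {μ : Measure α} [IsFiniteMeasure μ] {p : ℝ} (hp : 0 ≤ p)
    {φ : α → V} {K : Set α} (hK : IsCompact K) (hKm : MeasurableSet K) (hμ : ∀ᵐ x ∂μ, x ∈ K)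
    (hφ : ContinuousOn φ K) : Integrable (fun x ↦ ‖φ x‖ ^ p) μ := by
  have hcont : ContinuousOn (fun x ↦ ‖φ x‖ ^ p) K := hφ.norm.rpow_const fun _ _ ↦ .inr hp
  obtain ⟨B, hB⟩ := hK.exists_bound_of_continuousOn hcont
  exact .of_bound (aemeasurable_of_continuousOn_of_ae_mem hcont hKm hμ).aestronglyMeasurable B
    (hμ.mono hB)

end Lp

section Homothety

variable {E V : Type*} [NormedAddCommGroup E] [NormedSpace ℝ E] {D : Set E} {x : E}

theorem mapsTo_homothety_of_starConvex (hx : StarConvex ℝ x D) {t : ℝ} (ht : t ∈ Icc 0 1) :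
    MapsTo (homothety x t) D D := fun u hu ↦ by
  rw [AffineMap.homothety_eq_lineMap]
  exact hx.segment_subset hu (lineMap_mem_segment ℝ x u ht)

theorem edist_homothety_center_le_ediam (hx : x ∈ D) {u : E} (hu : u ∈ D) {t : ℝ} (ht : 0 ≤ t) :
    edist (homothety x t u) x ≤ ENNReal.ofReal t * Metric.ediam D := by
  rw [edist_dist, dist_homothety_center, Real.norm_of_nonneg ht, ENNReal.ofReal_mul ht,
    ← edist_dist]
  gcongr
  exact Metric.edist_le_ediam_of_mem hx hu

theorem edist_homothety_homothety_le_ediam (hx : x ∈ D) {u v : E} (hu : u ∈ D) (hv : v ∈ D)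
    {s t : ℝ} (hs : 0 ≤ s) (hst : s ≤ t) :
    edist (homothety x t u) (homothety x s v) ≤ 2 * ENNReal.ofReal t * Metric.ediam D := by
  calc edist (homothety x t u) (homothety x s v)
      ≤ edist (homothety x t u) x + edist (homothety x s v) x := edist_triangle_right _ _ _
    _ ≤ ENNReal.ofReal t * Metric.ediam D + ENNReal.ofReal t * Metric.ediam D := by
        gcongr
        · exact edist_homothety_center_le_ediam hx hu (hs.trans hst)
        · exact (edist_homothety_center_le_ediam hx hv hs).trans (by gcongr)
    _ = 2 * ENNReal.ofReal t * Metric.ediam D := by ring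

theorem tendstoUniformlyOn_comp_homothety [PseudoEMetricSpace V] {ψ : E → V}
    (hstar : StarConvex ℝ x D) (hx : x ∈ D) (hD : Bornology.IsBounded D)
    (hψ : ContinuousWithinAt ψ D x) :
    TendstoUniformlyOn (fun t u ↦ ψ (homothety x t u)) (fun _ ↦ ψ x) (𝓝[>] (0 : ℝ)) D := by
  refine EMetric.tendstoUniformlyOn_iff.2 fun ε hε ↦ ?_
  obtain ⟨δ, hδ, hψδ⟩ := EMetric.continuousWithinAt_iff.1 hψ ε hε
  have hradius : Tendsto (fun t ↦ ENNReal.ofReal t * Metric.ediam D) (𝓝[>] (0 : ℝ)) (𝓝 0) := by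
    have := ENNReal.Tendsto.mul_const (b := Metric.ediam D)
      (ENNReal.tendsto_ofReal (tendsto_id (x := 𝓝 (0 : ℝ)))) (.inr hD.ediam_ne_top)
    simpa using this.mono_left nhdsWithin_le_nhds
  filter_upwards [hradius.eventually_lt_const hδ, Ioc_mem_nhdsGT one_pos] with t htδ ht u hu
  rw [edist_comm]
  exact hψδ (mapsTo_homothety_of_starConvex hstar ⟨ht.1.le, ht.2⟩ hu)
    ((edist_homothety_center_le_ediam hx hu ht.1.le).trans_lt htδ)

variable [MeasurableSpace E] [BorelSpace E] [FiniteDimensional ℝ E] (μ : Measure E)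
  [μ.IsAddHaarMeasure]

theorem lintegral_comp_homothety (H : E → ℝ≥0∞) (x : E) {t : ℝ} (ht : 0 < t) :
    ∫⁻ u, H (homothety x t u) ∂μ = ENNReal.ofReal t⁻¹ ^ finrank ℝ E * ∫⁻ u, H u ∂μ := by
  calc ∫⁻ u, H (homothety x t u) ∂μ
      = ∫⁻ u, H (t • (u - x) + x) ∂μ := by
        simp only [AffineMap.homothety_apply, vsub_eq_sub, vadd_eq_add]
    _ = ∫⁻ u, H (t • u + x) ∂μ := lintegral_sub_right_eq_self (fun u ↦ H (t • u + x)) x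
    _ = ∫⁻ v, H (v + x) ∂(μ.map (t • ·)) :=
        (lintegral_map_equiv (fun v ↦ H (v + x))
          (Homeomorph.smulOfNeZero t ht.ne').toMeasurableEquiv).symm
    _ = ENNReal.ofReal t⁻¹ ^ finrank ℝ E * ∫⁻ u, H u ∂μ := by
        rw [Measure.map_addHaar_smul μ ht.ne', lintegral_smul_measure, lintegral_add_right_eq_self,
          smul_eq_mul, abs_of_pos (by positivity), ← inv_pow, ENNReal.ofReal_pow (by positivity)]

variable {μ}

theorem lintegral_cond_comp_homothety_le (hstar : StarConvex ℝ x D) (hDm : MeasurableSet D)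
    {t : ℝ} (ht : t ∈ Ioc 0 1) (H : E → ℝ≥0∞) :
    ∫⁻ u, H (homothety x t u) ∂μ[|D] ≤
      ENNReal.ofReal t⁻¹ ^ finrank ℝ E * ∫⁻ u, H u ∂μ[|D] := by
  have hrestrict : ∫⁻ u in D, H (homothety x t u) ∂μ ≤
      ENNReal.ofReal t⁻¹ ^ finrank ℝ E * ∫⁻ u in D, H u ∂μ := by
    rw [← lintegral_indicator hDm, ← lintegral_indicator hDm,
      ← lintegral_comp_homothety μ _ x ht.1]
    refine lintegral_mono (indicator_le fun u hu ↦ ?_)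
    rw [indicator_of_mem (mapsTo_homothety_of_starConvex hstar ⟨ht.1.le, ht.2⟩ hu)]
  simp only [ProbabilityTheory.cond, lintegral_smul_measure, smul_eq_mul]
  rw [mul_left_comm]
  gcongr

end Homothety

section Gagliardo

variable {E V : Type*}

/-- The Gagliardo energy `∬ |ψ u - ψ v| ^ p / |u - v| ^ q` of `ψ` with respect to `ν`, that is, the
`p`-th power of the `W^{s,p}` seminorm when `ν` is Lebesgue measure on a `d`-dimensional domain and
`q = d + s * p`. Diagonal pairs `u = v` contribute `0 / 0 = 0`. -/
noncomputable def gagliardoEnergy [PseudoEMetricSpace E] [MeasurableSpace E] [PseudoEMetricSpace V]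
    (ν : Measure E) (p q : ℝ) (ψ : E → V) : ℝ≥0∞ :=
  ∫⁻ u, ∫⁻ v, edist (ψ u) (ψ v) ^ p / edist u v ^ q ∂ν ∂ν

theorem edist_rpow_le_mul_div_edist_rpow [EMetricSpace E] [PseudoEMetricSpace V] {p q : ℝ}
    (hp : 0 < p) (hq : 0 < q) (ψ : E → V) {u v : E} {r : ℝ≥0∞} (hr : r ≠ ∞) (huv : edist u v ≤ r) :
    edist (ψ u) (ψ v) ^ p ≤ r ^ q * (edist (ψ u) (ψ v) ^ p / edist u v ^ q) := by
  rcases eq_or_ne u v with rfl | hne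
  · simp [hp]
  have hpos : edist u v ^ q ≠ 0 := by simp [ENNReal.rpow_eq_zero_iff, hne, hq, hq.le]
  have hfin : edist u v ^ q ≠ ∞ := ENNReal.rpow_ne_top_of_nonneg hq.le (ne_top_of_le_ne_top hr huv)
  calc edist (ψ u) (ψ v) ^ p
      = edist u v ^ q * (edist (ψ u) (ψ v) ^ p / edist u v ^ q) :=
        (ENNReal.mul_div_cancel hpos hfin).symm
    _ ≤ r ^ q * (edist (ψ u) (ψ v) ^ p / edist u v ^ q) := by gcongr

variable [NormedAddCommGroup E] [NormedSpace ℝ E] [MeasurableSpace E] [BorelSpace E]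
  [FiniteDimensional ℝ E] {μ : Measure E} [μ.IsAddHaarMeasure] {D : Set E} {x : E} {p q : ℝ}

theorem lintegral_edist_comp_homothety_le [PseudoEMetricSpace V] (hstar : StarConvex ℝ x D)
    (hx : x ∈ D) (hDm : MeasurableSet D) (hD : Bornology.IsBounded D) (hp : 0 < p) (hq : 0 < q)
    (ψ : E → V) {s t : ℝ} (hs : 0 < s) (hst : s ≤ t) (ht : t ≤ 1) :
    ∫⁻ u, ∫⁻ v, edist (ψ (homothety x t u)) (ψ (homothety x s v)) ^ p ∂μ[|D] ∂μ[|D] ≤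
      (2 * ENNReal.ofReal t * Metric.ediam D) ^ q *
        (ENNReal.ofReal t⁻¹ ^ finrank ℝ E * ENNReal.ofReal s⁻¹ ^ finrank ℝ E) *
        gagliardoEnergy μ[|D] p q ψ := by
  set ν := μ[|D]
  set r := 2 * ENNReal.ofReal t * Metric.ediam D
  have hr : r ≠ ∞ := ENNReal.mul_ne_top (by finiteness) hD.ediam_ne_top
  have hD_ae : ∀ᵐ u ∂ν, u ∈ D := ae_cond_mem hDm
  let k (u v : E) : ℝ≥0∞ := edist (ψ u) (ψ v) ^ p / edist u v ^ q
  calc ∫⁻ u, ∫⁻ v, edist (ψ (homothety x t u)) (ψ (homothety x s v)) ^ p ∂ν ∂ν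
      ≤ ∫⁻ u, ∫⁻ v, r ^ q * k (homothety x t u) (homothety x s v) ∂ν ∂ν := by
        refine lintegral_mono_ae (hD_ae.mono fun u hu ↦
          lintegral_mono_ae (hD_ae.mono fun v hv ↦ ?_))
        exact edist_rpow_le_mul_div_edist_rpow hp hq ψ hr
          (edist_homothety_homothety_le_ediam hx hu hv hs.le hst)
    _ = r ^ q * ∫⁻ u, ∫⁻ v, k (homothety x t u) (homothety x s v) ∂ν ∂ν := by
        have hrq : r ^ q ≠ ∞ := by finiteness
        simp_rw [lintegral_const_mul' _ _ hrq]
    _ ≤ r ^ q * ∫⁻ u, ENNReal.ofReal s⁻¹ ^ finrank ℝ E *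
          ∫⁻ v, k (homothety x t u) v ∂ν ∂ν := by
        gcongr with u
        exact lintegral_cond_comp_homothety_le hstar hDm ⟨hs, hst.trans ht⟩ _
    _ = r ^ q * (ENNReal.ofReal s⁻¹ ^ finrank ℝ E *
          ∫⁻ u, ∫⁻ v, k (homothety x t u) v ∂ν ∂ν) := by
        rw [lintegral_const_mul' _ _ (by finiteness)]
    _ ≤ r ^ q * (ENNReal.ofReal s⁻¹ ^ finrank ℝ E *
          (ENNReal.ofReal t⁻¹ ^ finrank ℝ E * ∫⁻ u, ∫⁻ v, k u v ∂ν ∂ν)) := by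
        gcongr
        exact lintegral_cond_comp_homothety_le hstar hDm ⟨hs.trans_le hst, ht⟩ fun u ↦
          ∫⁻ v, k u v ∂ν
    _ = _ := by
        rw [gagliardoEnergy]
        ring

-- Two Jacobians `t⁻ᵈ` against the kernel gain `t ^ q`: this is where `q > 2 * d` comes from.
theorem lintegral_edist_comp_homothety_half_le [PseudoEMetricSpace V] (hstar : StarConvex ℝ x D)
    (hx : x ∈ D) (hDm : MeasurableSet D) (hD : Bornology.IsBounded D) (hp : 0 < p) (hq : 0 < q)
    (ψ : E → V) {t : ℝ} (ht₀ : 0 < t) (ht₁ : t ≤ 1) :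
    ∫⁻ u, ∫⁻ v, edist (ψ (homothety x t u)) (ψ (homothety x (t / 2) v)) ^ p ∂μ[|D] ∂μ[|D] ≤
      (2 * Metric.ediam D) ^ q * 2 ^ finrank ℝ E * gagliardoEnergy μ[|D] p q ψ *
        ENNReal.ofReal t ^ (q - 2 * finrank ℝ E) := by
  refine (lintegral_edist_comp_homothety_le hstar hx hDm hD hp hq ψ (half_pos ht₀)
    (half_le_self ht₀.le) ht₁).trans_eq ?_
  have hτ₀ : ENNReal.ofReal t ≠ 0 := by simpa using ht₀
  have hhalf : ENNReal.ofReal (t / 2)⁻¹ = 2 * (ENNReal.ofReal t)⁻¹ := by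
    rw [inv_div, div_eq_mul_inv, ENNReal.ofReal_mul zero_le_two, ENNReal.ofReal_inv_of_pos ht₀,
      ENNReal.ofReal_ofNat]
  have hpow : ENNReal.ofReal t ^ (q - 2 * finrank ℝ E) =
      ENNReal.ofReal t ^ q * ((ENNReal.ofReal t)⁻¹ ^ finrank ℝ E) ^ 2 := by
    rw [ENNReal.rpow_sub _ _ hτ₀ ENNReal.ofReal_ne_top, div_eq_mul_inv, ← pow_mul, mul_comm _ 2,
      ← Nat.cast_ofNat, ← Nat.cast_mul, ENNReal.rpow_natCast, ENNReal.inv_pow]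
  rw [hhalf, hpow, ENNReal.ofReal_inv_of_pos ht₀, mul_right_comm 2,
    ENNReal.mul_rpow_of_nonneg _ _ hq.le, mul_pow 2]
  ring

theorem lintegral_edist_rpow_le_tsum_homothety [PseudoMetricSpace V] (hstar : StarConvex ℝ x D)
    (hx : x ∈ D) (hDm : MeasurableSet D) (hD : Bornology.IsBounded D) (hμ : μ D ≠ 0) (hp : 1 ≤ p)
    {ψ : E → V} (hψ : ContinuousOn ψ D) :
    (∫⁻ u, edist (ψ u) (ψ x) ^ p ∂μ[|D]) ^ (1 / p) ≤
      ∑' n : ℕ, (∫⁻ u, ∫⁻ v, edist (ψ (homothety x (2⁻¹ ^ n : ℝ) u))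
        (ψ (homothety x (2⁻¹ ^ (n + 1) : ℝ) v)) ^ p ∂μ[|D] ∂μ[|D]) ^ (1 / p) := by
  have : IsProbabilityMeasure μ[|D] :=
    cond_isProbabilityMeasure_of_finite hμ hD.measure_lt_top.ne
  have hD_ae : ∀ᵐ u ∂μ[|D], u ∈ D := ae_cond_mem hDm
  let φ (n : ℕ) (u : E) : V := ψ (homothety x (2⁻¹ ^ n : ℝ) u)
  have hφ (n : ℕ) : AEStronglyMeasurable (φ n) μ[|D] := by
    rw [← Measure.restrict_eq_self_of_ae_mem hD_ae]
    exact (hψ.comp (AffineMap.homothety_continuous x _).continuousOn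
      (mapsTo_homothety_of_starConvex hstar ⟨by positivity,
        pow_le_one₀ (by norm_num) (by norm_num)⟩)).aestronglyMeasurable hDm
  have hlim : Tendsto (fun n ↦ (∫⁻ u, edist (φ n u) (ψ x) ^ p ∂μ[|D]) ^ (1 / p)) atTop (𝓝 0) :=
    (tendsto_lintegral_edist_rpow_of_tendstoUniformlyOn hD_ae (by linarith)
      (tendstoUniformlyOn_comp_homothety hstar hx hD (hψ x hx))).comp
      (tendsto_pow_atTop_nhdsWithin_zero_of_lt_one (by norm_num) (by norm_num))
  simpa [φ] using le_tsum_of_le_add_succ_of_tendsto_zero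
    (fun n ↦ lintegral_edist_rpow_le_add hp (hφ n) (hφ (n + 1)) (ψ x)) hlim

theorem exists_lintegral_edist_rpow_le_gagliardoEnergy (hDm : MeasurableSet D)
    (hD : Bornology.IsBounded D) (hμ : μ D ≠ 0) (hp : 1 ≤ p) (hq : 2 * finrank ℝ E < q) :
    ∃ C : ℝ≥0∞, C ≠ ∞ ∧ ∀ {V : Type*} [PseudoMetricSpace V] {ψ : E → V}, ContinuousOn ψ D →
      ∀ {x}, x ∈ D → StarConvex ℝ x D →
      ∫⁻ u, edist (ψ u) (ψ x) ^ p ∂μ[|D] ≤ C * gagliardoEnergy μ[|D] p q ψ := by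
  have hp₀ : 0 < p := by linarith
  have hq₀ : 0 < q := lt_of_le_of_lt (by positivity) hq
  set K : ℝ≥0∞ := (2 * Metric.ediam D) ^ q * 2 ^ finrank ℝ E
  have hK : K ≠ ∞ := ENNReal.mul_ne_top (ENNReal.rpow_ne_top_of_nonneg hq₀.le
    (ENNReal.mul_ne_top (by finiteness) hD.ediam_ne_top)) (by finiteness)
  set ρ : ℝ≥0∞ := ENNReal.ofReal 2⁻¹ ^ ((q - 2 * finrank ℝ E) / p)
  have hρ : ρ < 1 := ENNReal.rpow_lt_one (by norm_num) (div_pos (by linarith) hp₀)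
  refine ⟨K * (1 - ρ)⁻¹ ^ p, ENNReal.mul_ne_top hK (ENNReal.rpow_ne_top_of_nonneg hp₀.le
    (ENNReal.inv_ne_top.2 (tsub_pos_of_lt hρ).ne')), fun {V _ ψ} hψ {x} hx hstar ↦ ?_⟩
  set G := gagliardoEnergy μ[|D] p q ψ
  have hscale (n : ℕ) : (∫⁻ u, ∫⁻ v, edist (ψ (homothety x (2⁻¹ ^ n : ℝ) u))
      (ψ (homothety x (2⁻¹ ^ (n + 1) : ℝ) v)) ^ p ∂μ[|D] ∂μ[|D]) ^ (1 / p) ≤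
      (K * G) ^ (1 / p) * ρ ^ n := by
    have hstep := lintegral_edist_comp_homothety_half_le (μ := μ) hstar hx hDm hD hp₀ hq₀ ψ
      (t := 2⁻¹ ^ n) (by positivity) (pow_le_one₀ (by norm_num) (by norm_num))
    rw [div_eq_mul_inv, ← pow_succ] at hstep
    refine (ENNReal.rpow_le_rpow hstep (by positivity)).trans_eq ?_
    rw [ENNReal.mul_rpow_of_nonneg _ _ (by positivity), ENNReal.ofReal_pow (by norm_num),
      ← ENNReal.rpow_mul, ← ENNReal.rpow_natCast_mul, mul_one_div, mul_comm (n : ℝ),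
      ENNReal.rpow_mul_natCast]
  rw [← ENNReal.rpow_le_rpow_iff (z := 1 / p) (by positivity)]
  calc (∫⁻ u, edist (ψ u) (ψ x) ^ p ∂μ[|D]) ^ (1 / p)
      ≤ ∑' n : ℕ, (K * G) ^ (1 / p) * ρ ^ n :=
        (lintegral_edist_rpow_le_tsum_homothety hstar hx hDm hD hμ hp hψ).trans
          (ENNReal.tsum_le_tsum hscale)
    _ = (K * G) ^ (1 / p) * (1 - ρ)⁻¹ := by rw [ENNReal.tsum_mul_left, ENNReal.tsum_geometric]
    _ = (K * (1 - ρ)⁻¹ ^ p * G) ^ (1 / p) := by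
        rw [mul_right_comm K, ENNReal.mul_rpow_of_nonneg (K * G) _ (by positivity), one_div,
          ENNReal.rpow_rpow_inv hp₀.ne']

theorem exists_enorm_rpow_le_lintegral_add_gagliardoEnergy (hDm : MeasurableSet D)
    (hD : Bornology.IsBounded D) (hμ : μ D ≠ 0) (hp : 1 ≤ p) (hq : 2 * finrank ℝ E < q) :
    ∃ C : ℝ≥0∞, C ≠ ∞ ∧ ∀ {V : Type*} [SeminormedAddCommGroup V] {ψ : E → V}, ContinuousOn ψ D →
      ∀ {x}, x ∈ D → StarConvex ℝ x D →
      ‖ψ x‖ₑ ^ p ≤ C * (∫⁻ u, ‖ψ u‖ₑ ^ p ∂μ[|D] + gagliardoEnergy μ[|D] p q ψ) := by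
  obtain ⟨C, hC, hosc⟩ := exists_lintegral_edist_rpow_le_gagliardoEnergy hDm hD hμ hp hq
  have : IsProbabilityMeasure μ[|D] :=
    cond_isProbabilityMeasure_of_finite hμ hD.measure_lt_top.ne
  have hD_ae : ∀ᵐ u ∂μ[|D], u ∈ D := ae_cond_mem hDm
  refine ⟨2 ^ (p - 1) * (1 + C), ENNReal.mul_ne_top
    (ENNReal.rpow_ne_top_of_nonneg (by linarith) (by finiteness)) (by finiteness),
    fun {V _ ψ} hψ {x} hx hstar ↦ ?_⟩
  set A := ∫⁻ u, ‖ψ u‖ₑ ^ p ∂μ[|D]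
  set G := gagliardoEnergy μ[|D] p q ψ
  have hψ_meas : AEMeasurable (fun u ↦ ‖ψ u‖ₑ ^ p) μ[|D] :=
    (aemeasurable_of_continuousOn_of_ae_mem hψ.enorm hDm hD_ae).pow_const p
  calc ‖ψ x‖ₑ ^ p = ∫⁻ _, ‖ψ x‖ₑ ^ p ∂μ[|D] := by simp
    _ ≤ ∫⁻ u, 2 ^ (p - 1) * (‖ψ u‖ₑ ^ p + edist (ψ u) (ψ x) ^ p) ∂μ[|D] := by
        refine lintegral_mono fun u ↦ le_trans ?_ (ENNReal.rpow_add_le_mul_rpow_add_rpow _ _ hp)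
        gcongr
        have := edist_triangle_left (ψ x) 0 (ψ u)
        rwa [edist_zero_right, edist_zero_right, add_comm] at this
    _ = 2 ^ (p - 1) * (A + ∫⁻ u, edist (ψ u) (ψ x) ^ p ∂μ[|D]) := by
        rw [lintegral_const_mul' _ _ (ENNReal.rpow_ne_top_of_nonneg (by linarith) (by finiteness)),
          lintegral_add_left' hψ_meas]
    _ ≤ 2 ^ (p - 1) * ((1 + C) * A + (1 + C) * G) := by
        gcongr
        · exact le_mul_of_one_le_left zero_le le_self_add
        · exact (hosc hψ hx hstar).trans (by gcongr; exact le_add_self)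
    _ = 2 ^ (p - 1) * (1 + C) * (A + G) := by ring

end Gagliardo

section Diagonal

variable {E V : Type*} [MeasurableSpace E] [SeminormedAddCommGroup V] {D : Set E} {p q : ℝ}

theorem lintegral_gagliardoEnergy_le [MetricSpace E] [OpensMeasurableSpace E]
    [SecondCountableTopology E] {σ ν : Measure E} [SFinite σ] [IsProbabilityMeasure ν]
    (hDm : MeasurableSet D) (hσ : ∀ᵐ x ∂σ, x ∈ D) (hν : ∀ᵐ y ∂ν, y ∈ D) (hp : 0 < p)
    {F : E → E → V} (hF : ContinuousOn F.uncurry (D ×ˢ D)) {M : ℝ≥0∞}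
    (hM : ∀ y ∈ D, ∀ y' ∈ D, y ≠ y' →
      ∫⁻ x, ‖F x y - F x y'‖ₑ ^ p ∂σ ≤ M * edist y y' ^ q) :
    ∫⁻ x, gagliardoEnergy ν p q (F x) ∂σ ≤ M := by
  let k (x : E) (z : E × E) : ℝ≥0∞ := edist (F x z.1) (F x z.2) ^ p / edist z.1 z.2 ^ q
  have hnum : ContinuousOn (fun w : E × E × E ↦ edist (F w.1 w.2.1) (F w.1 w.2.2))
      (D ×ˢ D ×ˢ D) :=
    continuous_edist.comp_continuousOn <| .prodMk
      (hF.comp (f := fun w : E × E × E ↦ (w.1, w.2.1)) (by fun_prop) fun w hw ↦ ⟨hw.1, hw.2.1⟩)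
      (hF.comp (f := fun w : E × E × E ↦ (w.1, w.2.2)) (by fun_prop) fun w hw ↦ ⟨hw.1, hw.2.2⟩)
  have hk : AEMeasurable k.uncurry (σ.prod (ν.prod ν)) :=
    ((aemeasurable_of_continuousOn_of_ae_mem hnum (hDm.prod (hDm.prod hDm))
      (ae_mem_prod hσ (ae_mem_prod hν hν))).pow_const p).div
      (measurable_snd.fst.edist measurable_snd.snd |>.pow_const q).aemeasurable
  have hk_slice {x : E} (hx : x ∈ D) : AEMeasurable (k x) (ν.prod ν) :=
    ((aemeasurable_of_continuousOn_of_ae_mem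
      (hnum.comp (f := fun z : E × E ↦ (x, z)) (by fun_prop) fun z hz ↦ ⟨hx, hz⟩)
      (hDm.prod hDm) (ae_mem_prod hν hν)).pow_const p).div
      (measurable_fst.edist measurable_snd |>.pow_const q).aemeasurable
  calc ∫⁻ x, gagliardoEnergy ν p q (F x) ∂σ
      = ∫⁻ x, ∫⁻ z, k x z ∂ν.prod ν ∂σ :=
        lintegral_congr_ae (hσ.mono fun x hx ↦ (lintegral_prod _ (hk_slice hx)).symm)
    _ = ∫⁻ z, ∫⁻ x, k x z ∂σ ∂ν.prod ν := lintegral_lintegral_swap hk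
    _ ≤ ∫⁻ _, M ∂ν.prod ν := by
        refine lintegral_mono_ae ((ae_mem_prod hν hν).mono fun ⟨y, y'⟩ ⟨hy, hy'⟩ ↦ ?_)
        rcases eq_or_ne y y' with rfl | hne
        · simp [k, hp]
        have hpos : edist y y' ^ q ≠ 0 := by simp [ENNReal.rpow_eq_zero_iff, hne]
        simp only [k, div_eq_mul_inv]
        rw [lintegral_mul_const' _ _ (ENNReal.inv_ne_top.2 hpos), ← div_eq_mul_inv]
        simp only [edist_eq_enorm_sub (F _ _)]
        exact ENNReal.div_le_of_le_mul (hM y hy y' hy' hne)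
    _ = M := by simp

variable [NormedAddCommGroup E] [NormedSpace ℝ E] [BorelSpace E] [FiniteDimensional ℝ E]

theorem exists_lintegral_diagonal_le (hne : D.Nonempty) (hD : Bornology.IsBounded D)
    (hconv : Convex ℝ D) (hopen : IsOpen D) (hp : 1 ≤ p) (hq : 2 * finrank ℝ E < q) :
    ∃ C : ℝ≥0∞, C ≠ ∞ ∧ ∀ (σ : Measure E) [SFinite σ], (∀ᵐ x ∂σ, x ∈ D) →
      ∀ {F : E → E → V}, ContinuousOn F.uncurry (D ×ˢ D) → ∀ {M : ℝ≥0∞},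
      (∀ y ∈ D, ∫⁻ x, ‖F x y‖ₑ ^ p ∂σ ≤ M) →
      (∀ y ∈ D, ∀ y' ∈ D, y ≠ y' → ∫⁻ x, ‖F x y - F x y'‖ₑ ^ p ∂σ ≤ M * edist y y' ^ q) →
      ∫⁻ x, ‖F x x‖ₑ ^ p ∂σ ≤ C * M := by
  have hDm := hopen.measurableSet
  let μ : Measure E := Measure.addHaar
  have hμ : μ D ≠ 0 := (hopen.measure_pos μ hne).ne'
  obtain ⟨C, hC, hsobolev⟩ := exists_enorm_rpow_le_lintegral_add_gagliardoEnergy hDm hD hμ hp hq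
  set ν := μ[|D]
  have : IsProbabilityMeasure ν := cond_isProbabilityMeasure_of_finite hμ hD.measure_lt_top.ne
  have hν : ∀ᵐ y ∂ν, y ∈ D := ae_cond_mem hDm
  refine ⟨C * 2, ENNReal.mul_ne_top hC (by finiteness), fun σ _ hσ F hF M hsup hinc ↦ ?_⟩
  have hF_meas : AEMeasurable (fun z : E × E ↦ ‖F z.1 z.2‖ₑ ^ p) (σ.prod ν) :=
    (aemeasurable_of_continuousOn_of_ae_mem hF.enorm (hDm.prod hDm)
      (ae_mem_prod hσ hν)).pow_const p
  have hmean : ∫⁻ x, ∫⁻ y, ‖F x y‖ₑ ^ p ∂ν ∂σ ≤ M := by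
    rw [lintegral_lintegral_swap hF_meas]
    exact (lintegral_mono_ae (hν.mono hsup)).trans_eq (by simp)
  have henergy : ∫⁻ x, gagliardoEnergy ν p q (F x) ∂σ ≤ M :=
    lintegral_gagliardoEnergy_le hDm hσ hν (by linarith) hF hinc
  calc ∫⁻ x, ‖F x x‖ₑ ^ p ∂σ
      ≤ ∫⁻ x, C * (∫⁻ y, ‖F x y‖ₑ ^ p ∂ν + gagliardoEnergy ν p q (F x)) ∂σ :=
        lintegral_mono_ae (hσ.mono fun x hx ↦ hsobolev
          (hF.comp (f := fun y ↦ (x, y)) (by fun_prop) fun y hy ↦ ⟨hx, hy⟩) hx (hconv hx))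
    _ = C * (∫⁻ x, ∫⁻ y, ‖F x y‖ₑ ^ p ∂ν ∂σ + ∫⁻ x, gagliardoEnergy ν p q (F x) ∂σ) := by
        rw [lintegral_const_mul' _ _ hC, lintegral_add_left' hF_meas.lintegral_prod_right']
    _ ≤ C * (M + M) := by gcongr
    _ = C * 2 * M := by ring

theorem exists_integral_diagonal_le_of_one_le (hne : D.Nonempty) (hD : Bornology.IsBounded D)
    (hconv : Convex ℝ D) (hopen : IsOpen D) {γ : ℝ} (hγ : 0 < γ)
    (hp : 1 ≤ p) (hq : 2 * finrank ℝ E < γ * p) :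
    ∃ C > 0, ∀ (σ : Measure E) [IsFiniteMeasure σ], (∀ᵐ x ∂σ, x ∈ D) →
      ∀ {F : E → E → V} {N : ℝ}, ContinuousOn F.uncurry (closure D ×ˢ closure D) →
      (∀ y ∈ closure D, (∫ x, ‖F x y‖ ^ p ∂σ) ^ (1 / p) ≤ N) →
      (∀ y ∈ closure D, ∀ h, h ≠ 0 → y + h ∈ closure D →
        (∫ x, ‖F x (y + h) - F x y‖ ^ p ∂σ) ^ (1 / p) ≤ N * ‖h‖ ^ γ) →
      (∫ x, ‖F x x‖ ^ p ∂σ) ^ (1 / p) ≤ C * N := by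
  have hp₀ : 0 < p := by linarith
  obtain ⟨C, hC, hdiag⟩ := exists_lintegral_diagonal_le (V := V) hne hD hconv hopen hp hq
  refine ⟨(C.toReal + 1) ^ (1 / p), by positivity, fun σ _ hσ F N hF hsup hinc ↦ ?_⟩
  have hN : 0 ≤ N := by
    obtain ⟨y, hy⟩ := hne
    exact le_trans (by positivity) (hsup y (subset_closure hy))
  have hlintegral {φ : E → V} (hφ : ContinuousOn φ (closure D)) {a : ℝ} (ha : 0 ≤ a) :
      (∫ x, ‖φ x‖ ^ p ∂σ) ^ (1 / p) ≤ a ↔ ∫⁻ x, ‖φ x‖ₑ ^ p ∂σ ≤ ENNReal.ofReal (a ^ p) :=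
    integral_rpow_norm_rpow_le_iff hp₀ ha (integrable_norm_rpow_of_continuousOn hp₀.le
      hD.isCompact_closure measurableSet_closure (hσ.mono fun _ ↦ (subset_closure ·)) hφ)
  have hslice {y : E} (hy : y ∈ D) : ContinuousOn (fun x ↦ F x y) (closure D) :=
    hF.comp (f := fun x ↦ (x, y)) (by fun_prop) fun x hx ↦ ⟨hx, subset_closure hy⟩
  have hFdiag : ContinuousOn (fun x ↦ F x x) (closure D) :=
    hF.comp (f := fun x ↦ (x, x)) (by fun_prop) fun x hx ↦ ⟨hx, hx⟩
  have hpair : ∀ y ∈ D, ∀ y' ∈ D, y ≠ y' → ∫⁻ x, ‖F x y - F x y'‖ₑ ^ p ∂σ ≤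
      ENNReal.ofReal (N ^ p) * edist y y' ^ (γ * p) := fun y hy y' hy' hyy' ↦ by
    have hbound := hinc y' (subset_closure hy') (y - y') (sub_ne_zero.2 hyy')
      (by rw [add_sub_cancel]; exact subset_closure hy)
    rw [add_sub_cancel, hlintegral (φ := fun x ↦ F x y - F x y') ((hslice hy).sub (hslice hy'))
      (by positivity)] at hbound
    rwa [ofReal_mul_norm_rpow_rpow hN hγ.le hp₀.le, ← edist_eq_enorm_sub] at hbound
  rw [hlintegral hFdiag (by positivity)]
  calc ∫⁻ x, ‖F x x‖ₑ ^ p ∂σ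
      ≤ C * ENNReal.ofReal (N ^ p) :=
        hdiag σ hσ (hF.mono (prod_mono subset_closure subset_closure))
          (fun y hy ↦ (hlintegral (hslice hy) hN).1 (hsup y (subset_closure hy))) hpair
    _ ≤ ENNReal.ofReal (C.toReal + 1) * ENNReal.ofReal (N ^ p) := by
        gcongr
        rw [ENNReal.le_ofReal_iff_toReal_le hC (by positivity)]
        linarith
    _ = ENNReal.ofReal (((C.toReal + 1) ^ (1 / p) * N) ^ p) := by
        rw [Real.mul_rpow (by positivity) hN, ← Real.rpow_mul (by positivity),
          one_div_mul_cancel hp₀.ne', Real.rpow_one, ENNReal.ofReal_mul (by positivity)]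

theorem exists_integral_diagonal_le (hne : D.Nonempty) (hD : Bornology.IsBounded D)
    (hconv : Convex ℝ D) (hopen : IsOpen D) {γ : ℝ} (hγ0 : 0 < γ) (hγ1 : γ ≤ 1)
    (hp : 2 * finrank ℝ E / γ < p) :
    ∃ C > 0, ∀ (σ : Measure E) [IsFiniteMeasure σ], (∀ᵐ x ∂σ, x ∈ D) →
      ∀ {F : E → E → V} {N : ℝ}, ContinuousOn F.uncurry (closure D ×ˢ closure D) →
      (∀ y ∈ closure D, (∫ x, ‖F x y‖ ^ p ∂σ) ^ (1 / p) ≤ N) →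
      (∀ y ∈ closure D, ∀ h, h ≠ 0 → y + h ∈ closure D →
        (∫ x, ‖F x (y + h) - F x y‖ ^ p ∂σ) ^ (1 / p) ≤ N * ‖h‖ ^ γ) →
      (∫ x, ‖F x x‖ ^ p ∂σ) ^ (1 / p) ≤ C * N := by
  rcases subsingleton_or_nontrivial E with _ | _
  · -- In dimension zero `p` may be less than `1`, where Minkowski's inequality fails.
    obtain ⟨y, hy⟩ := hne
    refine ⟨1, one_pos, fun σ _ _ F N _ hsup _ ↦ ?_⟩
    have hdiag (x : E) : F x x = F x y := by rw [Subsingleton.elim x y]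
    simpa only [hdiag, one_mul] using hsup y (subset_closure hy)
  · have hd : (1 : ℝ) ≤ finrank ℝ E := mod_cast finrank_pos
    rw [div_lt_iff₀' hγ0] at hp
    exact exists_integral_diagonal_le_of_one_le hne hD hconv hopen hγ0 (by nlinarith) hp

end Diagonal

theorem stmt_7_general {E V : Type*} [NormedAddCommGroup E] [NormedSpace ℝ E]
    [FiniteDimensional ℝ E] [MeasurableSpace E] [BorelSpace E] [SeminormedAddCommGroup V]
    {D : Set E} (hne : D.Nonempty) (hD : Bornology.IsBounded D) (hconv : Convex ℝ D)
    (hopen : IsOpen D) {γ p : ℝ} (hγ0 : 0 < γ) (hγ1 : γ ≤ 1) (hp : 2 * finrank ℝ E / γ < p) :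
    ∃ C > 0, ∀ (σ : Measure E) [IsFiniteMeasure σ], (∀ᵐ x ∂σ, x ∈ D) →
      ∀ (f : E → E → E → V) (N : ℝ),
      ContinuousOn (fun z : E × E × E ↦ f z.1 z.2.1 z.2.2)
        (closure D ×ˢ closure D ×ˢ closure D) →
      (∀ y1 ∈ closure D, ∀ y2 ∈ closure D, (∫ x, ‖f x y1 y2‖ ^ p ∂σ) ^ (1 / p) ≤ N) →
      (∀ y1 ∈ closure D, ∀ y2 ∈ closure D, ∀ h1, h1 ≠ 0 → y1 + h1 ∈ closure D →
        (∫ x, ‖f x (y1 + h1) y2 - f x y1 y2‖ ^ p ∂σ) ^ (1 / p) ≤ N * ‖h1‖ ^ γ) →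
      (∀ y1 ∈ closure D, ∀ y2 ∈ closure D, ∀ h2, h2 ≠ 0 → y2 + h2 ∈ closure D →
        (∫ x, ‖f x y1 (y2 + h2) - f x y1 y2‖ ^ p ∂σ) ^ (1 / p) ≤ N * ‖h2‖ ^ γ) →
      (∀ y1 ∈ closure D, ∀ y2 ∈ closure D, ∀ h1 h2, h1 ≠ 0 → h2 ≠ 0 →
        y1 + h1 ∈ closure D → y2 + h2 ∈ closure D →
        (∫ x, ‖f x (y1 + h1) (y2 + h2) - f x (y1 + h1) y2
            - f x y1 (y2 + h2) + f x y1 y2‖ ^ p ∂σ) ^ (1 / p) ≤ N * (‖h1‖ ^ γ * ‖h2‖ ^ γ)) →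
      (∀ y2 ∈ closure D, (∫ x, ‖f x x y2‖ ^ p ∂σ) ^ (1 / p) ≤ C * N) ∧
      (∀ y2 ∈ closure D, ∀ h, h ≠ 0 → y2 + h ∈ closure D →
        (∫ x, ‖f x x (y2 + h) - f x x y2‖ ^ p ∂σ) ^ (1 / p) ≤ C * N * ‖h‖ ^ γ) := by
  obtain ⟨C, hC, hdiag⟩ := exists_integral_diagonal_le (V := V) hne hD hconv hopen hγ0 hγ1 hp
  refine ⟨C, hC, fun σ _ hσ f N hf hsup hinc₁ hinc₂ hinc₁₂ ↦ ?_⟩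
  have hslice {y2 : E} (hy2 : y2 ∈ closure D) :
      ContinuousOn (fun z : E × E ↦ f z.1 z.2 y2) (closure D ×ˢ closure D) :=
    hf.comp (f := fun z : E × E ↦ (z.1, z.2, y2)) (by fun_prop) fun z hz ↦ ⟨hz.1, hz.2, hy2⟩
  refine ⟨fun y2 hy2 ↦ ?_, fun y2 hy2 h hh hy2h ↦ ?_⟩
  · exact hdiag σ hσ (F := fun x y1 ↦ f x y1 y2) (hslice hy2)
      (fun y1 hy1 ↦ hsup y1 hy1 y2 hy2) fun y1 hy1 ↦ hinc₁ y1 hy1 y2 hy2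
  · rw [mul_assoc]
    refine hdiag σ hσ (F := fun x y1 ↦ f x y1 (y2 + h) - f x y1 y2)
      ((hslice hy2h).sub (hslice hy2)) (fun y1 hy1 ↦ hinc₂ y1 hy1 y2 hy2 h hh hy2h)
      fun y1 hy1 h1 hh1 hy1h ↦ ?_
    rw [mul_assoc, mul_comm (‖h‖ ^ γ)]
    simpa only [sub_sub_sub_eq, sub_add] using hinc₁₂ y1 hy1 y2 hy2 h1 h hh1 hh hy1h hy2h

/-- partial diagonal trace. For nonempty bounded convex open `D ⊂ ℝ^d`,
`0 < γ ≤ 1`, `p > 2d/γ`, there is `C > 0` (depending only on `d, p, γ, D`) such that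
for every continuous `f : K × K × K → ℝ` with mixed `L^p(D)`-valued Hölder norm `≤ N`,
the partial diagonal trace `g(x,y2) = f(x,x,y2)` is an `L^p(D)`-valued `γ`-Hölder
function of `y2`, with sup norm and Hölder seminorm both bounded by `C·N`. -/
theorem stmt_7 {d : ℕ} (D : Set (EuclideanSpace ℝ (Fin d)))
    (hne : D.Nonempty) (hD : Bornology.IsBounded D) (hconv : Convex ℝ D)
    (hopen : IsOpen D)
    (γ p : ℝ) (hγ0 : 0 < γ) (hγ1 : γ ≤ 1) (hp : 2 * d / γ < p) :
    ∃ C > 0,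
      ∀ (f : EuclideanSpace ℝ (Fin d) → EuclideanSpace ℝ (Fin d) →
          EuclideanSpace ℝ (Fin d) → ℝ) (N : ℝ),
      ContinuousOn
        (fun z : EuclideanSpace ℝ (Fin d) × EuclideanSpace ℝ (Fin d) ×
            EuclideanSpace ℝ (Fin d) => f z.1 z.2.1 z.2.2)
        (closure D ×ˢ closure D ×ˢ closure D) →
      (∀ y1 ∈ closure D, ∀ y2 ∈ closure D,
        (∫ x in D, |f x y1 y2| ^ p) ^ (1 / p) ≤ N) →
      (∀ y1 ∈ closure D, ∀ y2 ∈ closure D,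
        ∀ h1 : EuclideanSpace ℝ (Fin d), h1 ≠ 0 → y1 + h1 ∈ closure D →
        (∫ x in D, |f x (y1 + h1) y2 - f x y1 y2| ^ p) ^ (1 / p) ≤ N * ‖h1‖ ^ γ) →
      (∀ y1 ∈ closure D, ∀ y2 ∈ closure D,
        ∀ h2 : EuclideanSpace ℝ (Fin d), h2 ≠ 0 → y2 + h2 ∈ closure D →
        (∫ x in D, |f x y1 (y2 + h2) - f x y1 y2| ^ p) ^ (1 / p) ≤ N * ‖h2‖ ^ γ) →
      (∀ y1 ∈ closure D, ∀ y2 ∈ closure D,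
        ∀ h1 h2 : EuclideanSpace ℝ (Fin d), h1 ≠ 0 → h2 ≠ 0 →
        y1 + h1 ∈ closure D → y2 + h2 ∈ closure D →
        (∫ x in D, |f x (y1 + h1) (y2 + h2) - f x (y1 + h1) y2
            - f x y1 (y2 + h2) + f x y1 y2| ^ p) ^ (1 / p)
          ≤ N * (‖h1‖ ^ γ * ‖h2‖ ^ γ)) →
      (∀ y2 ∈ closure D, (∫ x in D, |f x x y2| ^ p) ^ (1 / p) ≤ C * N) ∧
      (∀ y2 ∈ closure D, ∀ h : EuclideanSpace ℝ (Fin d), h ≠ 0 →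
        y2 + h ∈ closure D →
        (∫ x in D, |f x x (y2 + h) - f x x y2| ^ p) ^ (1 / p) ≤ C * N * ‖h‖ ^ γ) := by
  obtain ⟨C, hC, htrace⟩ := stmt_7_general (V := ℝ) hne hD hconv hopen hγ0 hγ1 (by simpa using hp)
  have : IsFiniteMeasure (volume.restrict D) := ⟨by simpa using hD.measure_lt_top⟩
  exact ⟨C, hC, htrace (volume.restrict D) (ae_restrict_mem hopen.measurableSet)⟩
end

section
/- Let s > 0, 0 < τ < 1, let k ≥ 1 and L ≥ 0 be integers. Then the tail of the k-dimensional geometric sum satisfies ∑_{ℓ ∈ ℕ^k, |ℓ| > L} 2^{−s|ℓ|} ≤ (1 − 2^{−sτ})^{−k} · 2^{−L s (1−τ)}, where |ℓ| = ℓ_1 + ⋯ + ℓ_k. -/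
/-!
Rankin's trick: write `2^{-s|ℓ|} = 2^{-sτ|ℓ|} · 2^{-s(1-τ)|ℓ|}`. On the tail the second factor is at
most `2^{-Ls(1-τ)}`, and the first is `∏ i, r ^ ℓ i` with `r = 2^{-sτ} < 1`, whose sum over all of
`ℕ^k` is the `k`-th power of a geometric series.
-/

open Filter

section ProductSeries

variable {ι : Type*} [Fintype ι]

theorem hasSum_pi_prod_of_nonneg {κ : ι → Type*} {f : ∀ i, κ i → ℝ} {a : ι → ℝ}
    (hf : ∀ i x, 0 ≤ f i x) (hfa : ∀ i, HasSum (f i) (a i)) :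
    HasSum (fun x : ∀ i, κ i => ∏ i, f i (x i)) (∏ i, a i) := by
  classical
  have hprod_nonneg (x : ∀ i, κ i) : 0 ≤ ∏ i, f i (x i) :=
    Finset.prod_nonneg fun i _ => hf i (x i)
  refine hasSum_of_isLUB_of_nonneg _ hprod_nonneg ⟨?upper, fun b hb => ?least⟩
  case upper =>
    rintro _ ⟨u, rfl⟩
    let box (i : ι) : Finset (κ i) := u.image (· i)
    have hbox : u ⊆ Fintype.piFinset box := fun x hx =>
      Fintype.mem_piFinset.2 fun i => Finset.mem_image_of_mem (· i) hx
    calc ∑ x ∈ u, ∏ i, f i (x i)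
        ≤ ∑ x ∈ Fintype.piFinset box, ∏ i, f i (x i) :=
          Finset.sum_le_sum_of_subset_of_nonneg hbox fun x _ _ => hprod_nonneg x
      _ = ∏ i, ∑ y ∈ box i, f i y := (Finset.prod_univ_sum box f).symm
      _ ≤ ∏ i, a i := Finset.prod_le_prod (fun i _ => Finset.sum_nonneg fun y _ => hf i y)
          fun i _ => sum_le_hasSum (box i) (fun y _ => hf i y) (hfa i)
  case least =>
    have heval (i : ι) : Tendsto (fun t : ∀ i, Finset (κ i) => t i) atTop atTop :=
      (Function.monotone_eval i).tendsto_atTop_atTop fun v =>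
        ⟨Function.update (fun _ => ∅) i v, by simp⟩
    have hlim : Tendsto (fun t : ∀ i, Finset (κ i) => ∏ i, ∑ y ∈ t i, f i y) atTop
        (nhds (∏ i, a i)) :=
      tendsto_finsetProd Finset.univ fun i _ => (hfa i).comp (heval i)
    refine le_of_tendsto' hlim fun t => ?_
    rw [Finset.prod_univ_sum]
    exact hb ⟨Fintype.piFinset t, rfl⟩

theorem hasSum_pi_prod_geometric {r : ι → ℝ} (hr0 : ∀ i, 0 ≤ r i) (hr1 : ∀ i, r i < 1) :
    HasSum (fun ℓ : ι → ℕ => ∏ i, r i ^ ℓ i) (∏ i, (1 - r i)⁻¹) :=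
  hasSum_pi_prod_of_nonneg (fun i n => pow_nonneg (hr0 i) n)
    fun i => hasSum_geometric_of_lt_one (hr0 i) (hr1 i)

theorem hasSum_pi_pow_sum {r : ℝ} (hr0 : 0 ≤ r) (hr1 : r < 1) :
    HasSum (fun ℓ : ι → ℕ => r ^ ∑ i, ℓ i) ((1 - r)⁻¹ ^ Fintype.card ι) := by
  simpa only [Finset.prod_pow_eq_pow_sum, Finset.prod_const, Finset.card_univ] using
    hasSum_pi_prod_geometric (ι := ι) (fun _ => hr0) (fun _ => hr1)

end ProductSeries

theorem tsum_subtype_mul_pow_le {α : Type*} {f : α → ℝ} {w : α → ℕ} {S : Set α} {b : ℝ} {N : ℕ}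
    (hf0 : ∀ x, 0 ≤ f x) (hf : Summable f) (hb0 : 0 ≤ b) (hb1 : b ≤ 1) (hw : ∀ x ∈ S, N ≤ w x) :
    ∑' x : S, f x * b ^ w x ≤ (∑' x, f x) * b ^ N := by
  have hterm (x : S) : f x * b ^ w x ≤ f x * b ^ N :=
    mul_le_mul_of_nonneg_left (pow_le_pow_of_le_one hb0 hb1 (hw x x.2)) (hf0 x)
  have hsum : Summable fun x : S => f x * b ^ N := (hf.subtype S).mul_right _
  have hsum_left : Summable fun x : S => f x * b ^ w x :=
    hsum.of_nonneg_of_le (fun x => mul_nonneg (hf0 x) (pow_nonneg hb0 _)) hterm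
  calc ∑' x : S, f x * b ^ w x
      ≤ ∑' x : S, f x * b ^ N := hsum_left.tsum_le_tsum hterm hsum
    _ = (∑' x : S, f x) * b ^ N := tsum_mul_right
    _ ≤ (∑' x, f x) * b ^ N :=
        mul_le_mul_of_nonneg_right (hf.tsum_subtype_le f S hf0) (pow_nonneg hb0 N)

theorem tsum_pi_mul_pow_sum_le {ι : Type*} [Fintype ι] {S : Set (ι → ℕ)} {r b : ℝ} {N : ℕ}
    (hr0 : 0 ≤ r) (hr1 : r < 1) (hb0 : 0 ≤ b) (hb1 : b ≤ 1) (hS : ∀ ℓ ∈ S, N ≤ ∑ i, ℓ i) :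
    ∑' ℓ : S, (r * b) ^ ∑ i, (ℓ : ι → ℕ) i ≤ (1 - r)⁻¹ ^ Fintype.card ι * b ^ N := by
  have hgeom := hasSum_pi_pow_sum (ι := ι) hr0 hr1
  simp only [mul_pow, ← hgeom.tsum_eq]
  exact tsum_subtype_mul_pow_le (fun ℓ => pow_nonneg hr0 _) hgeom.summable hb0 hb1 hS

/-- tail bound for the `k`-dimensional geometric sum:
`∑_{ℓ ∈ ℕ^k, |ℓ| > L} 2^{−s|ℓ|} ≤ (1 − 2^{−sτ})^{−k} · 2^{−Ls(1−τ)}`. -/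
theorem stmt_12 (s τ : ℝ) (hs : 0 < s) (hτ0 : 0 < τ) (hτ1 : τ < 1)
    (k L : ℕ) (hk : 1 ≤ k) :
    ∑' ℓ : {ℓ : Fin k → ℕ // L < ∑ i, ℓ i},
        (2 : ℝ) ^ (-(s * ∑ i, ((ℓ : Fin k → ℕ) i : ℝ)))
      ≤ ((1 - (2 : ℝ) ^ (-(s * τ)))⁻¹) ^ k *
          (2 : ℝ) ^ (-((L : ℝ) * s * (1 - τ))) := by
  have hr1 : (2 : ℝ) ^ (-(s * τ)) < 1 :=
    Real.rpow_lt_one_of_one_lt_of_neg one_lt_two (neg_lt_zero.2 (mul_pos hs hτ0))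
  have hb1 : (2 : ℝ) ^ (-(s * (1 - τ))) ≤ 1 := Real.rpow_le_one_of_one_le_of_nonpos one_le_two
    (neg_nonpos.2 (mul_nonneg hs.le (sub_nonneg.2 hτ1.le)))
  have hsplit (ℓ : Fin k → ℕ) : (2 : ℝ) ^ (-(s * ∑ i, (ℓ i : ℝ))) =
      (2 ^ (-(s * τ)) * 2 ^ (-(s * (1 - τ)))) ^ ∑ i, ℓ i := by
    rw [← Real.rpow_add two_pos, ← Real.rpow_mul_natCast zero_le_two]
    push_cast
    ring_nf
  have hbL : (2 : ℝ) ^ (-((L : ℝ) * s * (1 - τ))) = (2 ^ (-(s * (1 - τ)))) ^ L := by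
    rw [← Real.rpow_mul_natCast zero_le_two]
    ring_nf
  simp only [hsplit, hbL]
  simpa only [Fintype.card_fin] using! tsum_pi_mul_pow_sum_le (S := {ℓ : Fin k → ℕ | L < ∑ i, ℓ i})
    (by positivity) hr1 (by positivity) hb1 fun _ hℓ => le_of_lt hℓ
end

section
/- Let X be a Banach space, let k ≥ 1 be an integer, s > 0 and A ≥ 0, and let d : ℕ^k → X be a family satisfying ‖d_ℓ‖ ≤ A · 2^{−s|ℓ|} for every multi-index ℓ ∈ ℕ^k, where |ℓ| = ℓ_1 + ⋯ + ℓ_k. Then the family (d_ℓ)_{ℓ∈ℕ^k} is summable, and its sum u := ∑_{ℓ∈ℕ^k} d_ℓ satisfies, for every integer L ≥ 0 and every τ ∈ (0,1), the sparse truncation error bound ‖ u − ∑_{ℓ∈ℕ^k, |ℓ| ≤ L} d_ℓ ‖ ≤ A · (1 − 2^{−sτ})^{−k} · 2^{−L s (1−τ)}. (This is the abstract form of the convergence estimate for the Smolyak sparse interpolation operator S_L = ∑_{|ℓ|≤L} ⊗_{j=1}^k Δ_{ℓ_j}, whose hierarchical details Δ_{ℓ_1}⊗⋯⊗Δ_{ℓ_k}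 u decay like 2^{−s|ℓ|}.) -/
open Finset

/-!
The terms outside the truncation set `|ℓ| ≤ L` are split as
`2 ^ (-s|ℓ|) = 2 ^ (-s(1 - τ)|ℓ|) * 2 ^ (-sτ|ℓ|)`. The first factor is at most `2 ^ (-Ls(1 - τ))`,
and the second is summable over all of `ℕ^k`: its sum is the product of `k` geometric series.
The argument uses only that the decay exponent is a positive linear form in `ℓ`, so it also covers
anisotropic decay, with one rate `s i` per direction.
-/

section ProductOfSeries

variable {R : Type*} [NormedCommRing R]

lemma hasSum_and_summable_norm_prod_pi_fin {n : ℕ} {κ : Fin n → Type*} {f : ∀ i, κ i → R}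
    {a : Fin n → R} (hf : ∀ i, HasSum (f i) (a i)) (hf_norm : ∀ i, Summable fun j => ‖f i j‖) :
    HasSum (fun x : ∀ i, κ i => ∏ i, f i (x i)) (∏ i, a i) ∧
      Summable fun x : ∀ i, κ i => ‖∏ i, f i (x i)‖ := by
  induction n with
  | zero =>
    exact ⟨by simpa only [univ_eq_empty, prod_empty] using hasSum_unique _, .of_finite⟩
  | succ n ih =>
    obtain ⟨ih_sum, ih_norm⟩ := ih (fun i => hf i.succ) (fun i => hf_norm i.succ)
    rw [← (Fin.consEquiv κ).hasSum_iff, ← (Fin.consEquiv κ).summable_iff]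
    simp only [Function.comp_def, Fin.prod_univ_succ, Fin.consEquiv_apply, Fin.cons_zero,
      Fin.cons_succ]
    have hsummable := summable_mul_of_summable_norm' (hf_norm 0) (hf 0).summable ih_norm
      ih_sum.summable
    have hsum := (hf 0).mul ih_sum hsummable
    have hsum_norm := (hf_norm 0).mul_norm ih_norm
    exact ⟨hsum, hsum_norm⟩

lemma hasSum_prod_pi_of_summable_norm {ι : Type*} [Fintype ι] {κ : ι → Type*}
    {f : ∀ i, κ i → R} {a : ι → R} (hf : ∀ i, HasSum (f i) (a i))
    (hf_norm : ∀ i, Summable fun j => ‖f i j‖) :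
    HasSum (fun x : ∀ i, κ i => ∏ i, f i (x i)) (∏ i, a i) := by
  let e := (Fintype.equivFin ι).symm
  rw [← (Equiv.piCongrLeft κ e).hasSum_iff]
  simpa only [Function.comp_def, ← e.prod_comp, Equiv.piCongrLeft_apply_apply] using
    (hasSum_and_summable_norm_prod_pi_fin (fun i => hf (e i)) fun i => hf_norm (e i)).1

end ProductOfSeries

lemma hasSum_prod_pow_of_norm_lt_one {ι K : Type*} [Fintype ι] [NormedField K] {x : ι → K}
    (hx : ∀ i, ‖x i‖ < 1) :
    HasSum (fun ℓ : ι → ℕ => ∏ i, x i ^ ℓ i) (∏ i, (1 - x i)⁻¹) :=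
  hasSum_prod_pi_of_summable_norm (fun i => hasSum_geometric_of_norm_lt_one (hx i))
    fun i => summable_norm_geometric_of_norm_lt_one (hx i)

lemma hasSum_rpow_neg_sum_mul {ι : Type*} [Fintype ι] {b : ℝ} (hb : 1 < b) {s : ι → ℝ}
    (hs : ∀ i, 0 < s i) :
    HasSum (fun ℓ : ι → ℕ => b ^ (-∑ i, s i * ℓ i)) (∏ i, (1 - b ^ (-s i))⁻¹) := by
  have hb_pos : 0 < b := one_pos.trans hb
  have hlt (i) : ‖b ^ (-s i)‖ < 1 := by
    rw [Real.norm_of_nonneg (by positivity)]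
    exact Real.rpow_lt_one_of_one_lt_of_neg hb (neg_lt_zero.2 (hs i))
  have hpow (ℓ : ι → ℕ) : b ^ (-∑ i, s i * ℓ i) = ∏ i, (b ^ (-s i)) ^ ℓ i := by
    simp only [← sum_neg_distrib, Real.rpow_sum_of_pos hb_pos, ← neg_mul,
      Real.rpow_mul_natCast hb_pos.le]
  simpa only [hpow] using hasSum_prod_pow_of_norm_lt_one hlt

lemma norm_sub_sum_le_of_hasSum {α E : Type*} [SeminormedAddCommGroup E] {f : α → E} {g : α → ℝ}
    {u : E} {c : ℝ} {F : Finset α} (hf : HasSum f u) (hg : HasSum g c) (hg_nonneg : 0 ≤ g)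
    (hfg : ∀ a ∉ F, ‖f a‖ ≤ g a) : ‖u - ∑ a ∈ F, f a‖ ≤ c := by
  have htail : HasSum (fun a : {a // a ∉ F} => f a) (u - ∑ a ∈ F, f a) :=
    F.hasSum_compl_iff.2 (by simpa using hf)
  calc ‖u - ∑ a ∈ F, f a‖ ≤ ∑' a : {a // a ∉ F}, g a :=
        htail.norm_le_of_bounded (hg.summable.subtype _).hasSum fun a => hfg a a.2
    _ ≤ ∑' a, g a := hg.summable.tsum_subtype_le g _ hg_nonneg
    _ = c := hg.tsum_eq

lemma rpow_neg_le_mul_rpow_neg {b m w τ : ℝ} (hb : 1 ≤ b) (hmw : m ≤ w) (hτ : τ ≤ 1) :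
    b ^ (-w) ≤ b ^ (-(m * (1 - τ))) * b ^ (-(w * τ)) := by
  rw [← Real.rpow_add (one_pos.trans_le hb)]
  refine Real.rpow_le_rpow_of_exponent_le hb ?_
  linarith [mul_le_mul_of_nonneg_right hmw (sub_nonneg.2 hτ)]

lemma mem_filter_piFinset_range_succ {ι : Type*} [Fintype ι] [DecidableEq ι] {L : ℕ} {ℓ : ι → ℕ} :
    ℓ ∈ (Fintype.piFinset fun _ : ι => range (L + 1)).filter (fun ℓ => ∑ i, ℓ i ≤ L) ↔
      ∑ i, ℓ i ≤ L := by
  simp only [mem_filter, Fintype.mem_piFinset, mem_range, Order.lt_add_one_iff,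
    and_iff_right_iff_imp]
  exact fun h i => (single_le_sum_of_canonicallyOrdered (mem_univ i)).trans h

lemma mul_le_sum_mul_of_notMem {ι : Type*} [Fintype ι] [DecidableEq ι] {L : ℕ} {s : ℝ}
    (hs : 0 ≤ s) {ℓ : ι → ℕ}
    (hℓ : ℓ ∉ (Fintype.piFinset fun _ : ι => range (L + 1)).filter (fun ℓ => ∑ i, ℓ i ≤ L)) :
    L * s ≤ ∑ i, s * ℓ i := by
  rw [mem_filter_piFinset_range_succ, not_le] at hℓ
  rw [← mul_sum, mul_comm]
  exact mul_le_mul_of_nonneg_left (mod_cast hℓ.le) hs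

theorem stmt_13_general {ι X : Type*} [Fintype ι] [SeminormedAddCommGroup X] [CompleteSpace X]
    {b A : ℝ} {s : ι → ℝ} (hb : 1 < b) (hs : ∀ i, 0 < s i) {f : (ι → ℕ) → X}
    (hf : ∀ ℓ, ‖f ℓ‖ ≤ A * b ^ (-∑ i, s i * ℓ i)) :
    Summable f ∧
    ∀ (F : Finset (ι → ℕ)) (m τ : ℝ), (∀ ℓ ∉ F, m ≤ ∑ i, s i * ℓ i) → 0 < τ → τ ≤ 1 →
      ‖(∑' ℓ, f ℓ) - ∑ ℓ ∈ F, f ℓ‖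
        ≤ A * (∏ i, (1 - b ^ (-(s i * τ)))⁻¹) * b ^ (-(m * (1 - τ))) := by
  have hsum : Summable f :=
    .of_norm_bounded ((hasSum_rpow_neg_sum_mul hb hs).mul_left A).summable hf
  refine ⟨hsum, fun F m τ hF hτ hτ' => ?_⟩
  have hA : 0 ≤ A := by simpa using (norm_nonneg _).trans (hf 0)
  have : 0 < b := one_pos.trans hb
  have hmajorant := (hasSum_rpow_neg_sum_mul hb fun i => mul_pos (hs i) hτ).mul_left
    (A * b ^ (-(m * (1 - τ))))
  rw [mul_right_comm]
  refine norm_sub_sum_le_of_hasSum hsum.hasSum hmajorant (fun ℓ => by positivity) fun ℓ hℓ => ?_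
  calc ‖f ℓ‖ ≤ A * b ^ (-∑ i, s i * ℓ i) := hf ℓ
    _ ≤ A * (b ^ (-(m * (1 - τ))) * b ^ (-((∑ i, s i * ℓ i) * τ))) := by
        gcongr
        exact rpow_neg_le_mul_rpow_neg hb.le (hF ℓ hℓ) hτ'
    _ = A * b ^ (-(m * (1 - τ))) * b ^ (-∑ i, s i * τ * ℓ i) := by
        simp only [mul_assoc, sum_mul, mul_comm τ]

/-- abstract Smolyak truncation estimate. If `‖f ℓ‖ ≤ A · 2^{−s|ℓ|}`
for all multi-indices `ℓ ∈ ℕ^k`, then `f` is summable and, for every level `L` and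
every `τ ∈ (0,1)`, the sparse truncation error satisfies
`‖∑' f − ∑_{|ℓ| ≤ L} f ℓ‖ ≤ A (1 − 2^{−sτ})^{−k} 2^{−Ls(1−τ)}`. -/
theorem stmt_13 {X : Type*} [NormedAddCommGroup X] [CompleteSpace X]
    (k : ℕ) (hk : 1 ≤ k) (s A : ℝ) (hs : 0 < s) (hA : 0 ≤ A)
    (f : (Fin k → ℕ) → X)
    (hf : ∀ ℓ : Fin k → ℕ, ‖f ℓ‖ ≤ A * (2 : ℝ) ^ (-(s * ∑ i, (ℓ i : ℝ)))) :
    Summable f ∧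
    ∀ (L : ℕ) (τ : ℝ), 0 < τ → τ < 1 →
      ‖(∑' ℓ, f ℓ) -
          ∑ ℓ ∈ (Fintype.piFinset fun _ : Fin k => Finset.range (L + 1)).filter
            (fun ℓ => ∑ i, ℓ i ≤ L), f ℓ‖
        ≤ A * ((1 - (2 : ℝ) ^ (-(s * τ)))⁻¹) ^ k *
            (2 : ℝ) ^ (-((L : ℝ) * s * (1 - τ))) := by
  obtain ⟨hsum, herr⟩ := stmt_13_general (s := fun _ => s) one_lt_two (fun _ => hs)
    (by simpa only [mul_sum] using hf)
  exact ⟨hsum, fun L τ hτ hτ' => by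
    simpa using herr _ _ τ (fun _ => mul_le_sum_mul_of_notMem hs.le) hτ hτ'.le⟩
end
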